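/- arXiv:1201.3014 — 2 statements merged into one kernel-verified Lean document; each statement's English description precedes it below -/
import Mathlib

section
/- Let G be a plane graph with outer face bounded by a cycle F, let xy be an edge of F, and let L be a list assignment for G such that |L(v)| ≥ 5 for every vertex v not on F, |L(v)| ≥ 3 for every vertex v of F other than x and y, |L(x)| = |L(y)| = 1, and L(x) ≠ L(y). Then G is L-colorable. -/
open Set

noncomputable section

/-- A drawing of a simple graph in the plane: vertices are mapped to distinct points,
each edge is realized by a simple arc joining the images of its endpoints, arcs do not
pass through vertex points, any two arcs realizing distinct edges meet in at most one
point, and no point of the plane that is not a vertex point lies on three or more arcs. -/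
structure Drawing {V : Type} (G : SimpleGraph V) where
  pos : V → ℝ × ℝ
  pos_inj : Function.Injective pos
  arc : ∀ ⦃u v : V⦄, G.Adj u v → Path (pos u) (pos v)
  arc_symm : ∀ ⦃u v : V⦄ (h : G.Adj u v), arc h.symm = (arc h).symm
  arc_inj : ∀ ⦃u v : V⦄ (h : G.Adj u v), Function.Injective ⇑(arc h)
  arc_vertex : ∀ ⦃u v : V⦄ (h : G.Adj u v) (t : unitInterval) (w : V),
    arc h t = pos w → t = 0 ∨ t = 1
  arc_meet_once : ∀ ⦃u v x y : V⦄ (h₁ : G.Adj u v) (h₂ : G.Adj x y),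
    s(u, v) ≠ s(x, y) → (Set.range ⇑(arc h₁) ∩ Set.range ⇑(arc h₂)).Subsingleton
  arc_no_triple : ∀ ⦃u₁ v₁ u₂ v₂ u₃ v₃ : V⦄ (h₁ : G.Adj u₁ v₁) (h₂ : G.Adj u₂ v₂)
    (h₃ : G.Adj u₃ v₃), s(u₁, v₁) ≠ s(u₂, v₂) → s(u₁, v₁) ≠ s(u₃, v₃) →
    s(u₂, v₂) ≠ s(u₃, v₃) →
    ∀ p ∈ Set.range ⇑(arc h₁) ∩ Set.range ⇑(arc h₂) ∩ Set.range ⇑(arc h₃),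
      ∃ w : V, p = pos w

namespace Drawing

variable {V : Type} {G : SimpleGraph V} (D : Drawing G)

/-- The set of points used by the arc of an edge. -/
def arcSet ⦃u v : V⦄ (h : G.Adj u v) : Set (ℝ × ℝ) :=
  Set.range ⇑(D.arc h)

/-- The set of interior points of the arc of an edge. -/
def arcInterior ⦃u v : V⦄ (h : G.Adj u v) : Set (ℝ × ℝ) :=
  ⇑(D.arc h) '' {t : unitInterval | t ≠ 0 ∧ t ≠ 1}

/-- All points of the plane used by the drawing. -/
def graphSet : Set (ℝ × ℝ) :=
  Set.range D.pos ∪ ⋃ (u : V) (v : V) (h : G.Adj u v), D.arcSet h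

/-- A crossing of a drawing: a point interior to the arcs of two distinct edges. -/
def IsCrossing (p : ℝ × ℝ) : Prop :=
  ∃ (u v x y : V) (h₁ : G.Adj u v) (h₂ : G.Adj x y),
    s(u, v) ≠ s(x, y) ∧ p ∈ D.arcInterior h₁ ∧ p ∈ D.arcInterior h₂

/-- A drawing is plane if it has no crossings. -/
def IsPlane : Prop := ∀ p : ℝ × ℝ, ¬ D.IsCrossing p

/-- The faces of a drawing are the connected components of the complement
of the drawing. -/
def IsFace (f : Set (ℝ × ℝ)) : Prop :=
  ∃ q : ℝ × ℝ, q ∉ D.graphSet ∧ f = connectedComponentIn D.graphSetᶜ q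

/-- The outer (unbounded) face of a drawing. -/
def outerFace : Set (ℝ × ℝ) :=
  {p : ℝ × ℝ | p ∉ D.graphSet ∧
    ¬ Bornology.IsBounded (connectedComponentIn D.graphSetᶜ p)}

/-- A vertex lies on the outer face if its point is on the boundary of the outer face. -/
def OnOuter (v : V) : Prop := D.pos v ∈ frontier D.outerFace

/-- The set of points of the plane used by the drawing of a walk. -/
def walkSet {a b : V} (W : G.Walk a b) : Set (ℝ × ℝ) :=
  D.pos '' {v : V | v ∈ W.support} ∪ ⋃ d ∈ W.darts, D.arcSet d.adj

/-- A closed walk bounds the outer face if the boundary of the outer face is exactly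
the drawing of the walk. -/
def BoundsOuter {a : V} (W : G.Walk a a) : Prop :=
  frontier D.outerFace = D.walkSet W

end Drawing

/-- The open region enclosed by a set `S` (typically the drawing of a cycle):
all points outside `S` whose connected component in the complement of `S` is bounded. -/
def enclosed (S : Set (ℝ × ℝ)) : Set (ℝ × ℝ) :=
  {p : ℝ × ℝ | p ∉ S ∧ Bornology.IsBounded (connectedComponentIn Sᶜ p)}

namespace Drawing

variable {V : Type} {G : SimpleGraph V} (D : Drawing G)

/-- The closed disc bounded by (the drawing of) a closed walk. -/
def closedDisc {a : V} (W : G.Walk a a) : Set (ℝ × ℝ) :=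
  D.walkSet W ∪ enclosed (D.walkSet W)

/-- The endpoints of the (two) edges incident with a crossing point `p`. -/
def crossingEnds (p : ℝ × ℝ) : Set V :=
  {w : V | ∃ (z : V) (h : G.Adj w z), p ∈ D.arcInterior h}

end Drawing

/-- A proper colouring of `G` from the lists `L`. -/
def IsListColoring {V : Type} (G : SimpleGraph V) (L : V → Finset ℕ) (c : V → ℕ) : Prop :=
  (∀ v, c v ∈ L v) ∧ ∀ ⦃u v : V⦄, G.Adj u v → c u ≠ c v

/-- `G` is colourable from the lists `L`. -/
def ListColorable {V : Type} (G : SimpleGraph V) (L : V → Finset ℕ) : Prop :=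
  ∃ c : V → ℕ, IsListColoring G L c


namespace Thomassen

theorem exists_log {X : Type*} [TopologicalSpace X] [SimplyConnectedSpace X]
    [LocallyPathConnectedSpace X] (g : X → ℂ) (hg : Continuous g) (h0 : ∀ x, g x ≠ 0) :
    ∃ f : X → ℂ, Continuous f ∧ ∀ x, Complex.exp (f x) = g x := by
  obtain ⟨x₀⟩ : Nonempty X := inferInstance
  obtain ⟨f, ⟨-, hf⟩, -⟩ := Complex.isCoveringMapOn_exp.existsUnique_continuousMap_lifts
    ⟨g, hg⟩ (a₀ := x₀) (Complex.exp_log (h0 x₀)) (fun x => h0 x)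
  exact ⟨f, f.continuous, fun x => congrFun hf x⟩

/-- Two continuous logarithms of the same function have the same increments. -/
theorem log_increment_unique {f g : ℝ → ℂ} (hf : Continuous f) (hg : Continuous g)
    (h : ∀ x, Complex.exp (f x) = Complex.exp (g x)) (a b : ℝ) :
    f b - f a = g b - g a := by
  have hu : ∃ f₁ : C(ℝ, ℂ), (f₁ 0 = g 0) ∧ ∀ x, f₁ x = f x + (g 0 - f 0) :=
    ⟨⟨fun x => f x + (g 0 - f 0), by fun_prop⟩, by simp, fun x => rfl⟩
  obtain ⟨f₁, h0, h1⟩ := hu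
  have hex : ∀ x, Complex.exp (f₁ x) = Complex.exp (g x) := by
    intro x
    rw [h1, Complex.exp_add, Complex.exp_sub, h, h, div_self (Complex.exp_ne_zero _), mul_one]
  have := (Complex.isCoveringMapOn_exp.existsUnique_continuousMap_lifts
    ⟨fun x => Complex.exp (g x), by fun_prop⟩ (a₀ := (0 : ℝ)) (e₀ := g 0) rfl
      (fun x => Complex.exp_ne_zero _)).unique (y₁ := f₁) (y₂ := ⟨g, hg⟩) ⟨h0, funext hex⟩ ⟨rfl, rfl⟩
  have h2 : ∀ x, f₁ x = g x := fun x => by rw [this]; rfl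
  have ha := h2 a
  have hb := h2 b
  rw [h1] at ha hb
  linear_combination hb - ha

/-- `IsTurn m γ A`: `A` is the increment of a continuous logarithm of `γ - m` along `γ`. -/
def IsTurn {a b : ℂ} (m : ℂ) (γ : Path a b) (A : ℂ) : Prop :=
  ∃ f : ℝ → ℂ, Continuous f ∧ (∀ t, Complex.exp (f t) = γ.extend t - m) ∧ A = f 1 - f 0

theorem IsTurn.unique {a b m : ℂ} {γ : Path a b} {A B : ℂ} (hA : IsTurn m γ A)
    (hB : IsTurn m γ B) : A = B := by
  obtain ⟨f, hf, hf', rfl⟩ := hA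
  obtain ⟨g, hg, hg', rfl⟩ := hB
  exact log_increment_unique hf hg (fun x => by rw [hf', hg']) 0 1

theorem extend_mem_range {a b : ℂ} (γ : Path a b) (t : ℝ) : γ.extend t ∈ range γ := by
  exact ⟨projIcc 0 1 zero_le_one t, rfl⟩

theorem exists_turn {a b m : ℂ} (γ : Path a b) (hm : m ∉ range γ) : ∃ A, IsTurn m γ A := by
  obtain ⟨f, hf, hf'⟩ := exists_log (fun t : ℝ => γ.extend t - m)
    (by have := γ.continuous_extend; fun_prop)
    (fun t h => hm (by rw [← sub_eq_zero.mp h]; exact extend_mem_range γ t))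
  exact ⟨_, f, hf, hf', rfl⟩

theorem IsTurn.exp_eq {a b m : ℂ} {γ : Path a b} {A : ℂ} (h : IsTurn m γ A) :
    Complex.exp A = (b - m) / (a - m) := by
  obtain ⟨f, hf, hf', rfl⟩ := h
  rw [Complex.exp_sub, hf', hf']; simp

theorem turn_square {a b c d : ℂ} (γ : Path a b) (δ : Path c d)
    (hdis : Disjoint (range γ) (range δ)) {Ac Ad Ba Bb : ℂ}
    (hAc : IsTurn c γ Ac) (hAd : IsTurn d γ Ad) (hBa : IsTurn a δ Ba) (hBb : IsTurn b δ Bb) :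
    Bb - Ba = Ad - Ac := by
  obtain ⟨f, hf, hf'⟩ := exists_log (fun p : ℝ × ℝ => γ.extend p.1 - δ.extend p.2)
    (by have := γ.continuous_extend; have := δ.continuous_extend; fun_prop)
    (fun p h => hdis.le_bot ⟨extend_mem_range γ p.1, by
      rw [sub_eq_zero.mp h]; exact extend_mem_range δ p.2⟩)
  have e1 : IsTurn c γ (f (1, 0) - f (0, 0)) :=
    ⟨fun s => f (s, 0), by fun_prop, fun s => by rw [hf']; simp, rfl⟩
  have e2 : IsTurn d γ (f (1, 1) - f (0, 1)) :=
    ⟨fun s => f (s, 1), by fun_prop, fun s => by rw [hf']; simp, rfl⟩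
  have e3 : IsTurn a δ (f (0, 1) - f (0, 0)) :=
    ⟨fun s => f (0, s) + Real.pi * Complex.I, by fun_prop, fun s => by
      rw [Complex.exp_add, hf', Complex.exp_pi_mul_I]; simp, by ring⟩
  have e4 : IsTurn b δ (f (1, 1) - f (1, 0)) :=
    ⟨fun s => f (1, s) + Real.pi * Complex.I, by fun_prop, fun s => by
      rw [Complex.exp_add, hf', Complex.exp_pi_mul_I]; simp, by ring⟩
  rw [hAc.unique e1, hAd.unique e2, hBa.unique e3, hBb.unique e4]
  ring

/-- Van Kampen: the complete graph on five vertices has no continuous map to the plane in which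
independent edges have disjoint images. -/
theorem van_kampen_complex (p : Fin 5 → ℂ) (γ : ∀ i j : Fin 5, Path (p i) (p j))
    (hdis : ∀ i j k l : Fin 5, i < j → k < l → i ≠ k → i ≠ l → j ≠ k → j ≠ l →
      Disjoint (range (γ i j)) (range (γ k l))) : False := by
  -- points do not lie on edges not incident with them
  have hne : ∀ m i j : Fin 5, i < j → m ≠ i → m ≠ j → p m ∉ range (γ i j) := by
    intro m i j hij hi hj hmem
    obtain ⟨k, hk1, hk2, hk3⟩ : ∃ k : Fin 5, k ≠ m ∧ k ≠ i ∧ k ≠ j := by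
      clear hmem hi hj hij; revert m i j; decide
    rcases lt_or_gt_of_ne hk1 with h | h
    · exact (hdis k m i j h hij hk2 hk3 hi hj).le_bot ⟨⟨1, by simp⟩, hmem⟩
    · exact (hdis m k i j h hij hi hj hk2 hk3).le_bot ⟨⟨0, by simp⟩, hmem⟩
  have hpne : ∀ i j : Fin 5, i ≠ j → p i ≠ p j := by
    intro i j hij h
    obtain ⟨k, hk1, hk2⟩ : ∃ k : Fin 5, k ≠ i ∧ k ≠ j := by
      clear h hij; revert i j; decide
    rcases lt_or_gt_of_ne hk2 with h' | h'
    · exact hne i k j h' hk1.symm hij ⟨1, by simp [h]⟩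
    · exact hne i j k h' hij hk1.symm ⟨0, by simp [h]⟩
  have hA : ∀ m i j : Fin 5, ∃ A : ℂ, i < j → m ≠ i → m ≠ j → IsTurn (p m) (γ i j) A := by
    intro m i j
    by_cases h : i < j ∧ m ≠ i ∧ m ≠ j
    · obtain ⟨A, hA⟩ := exists_turn (γ i j) (hne m i j h.1 h.2.1 h.2.2)
      exact ⟨A, fun _ _ _ => hA⟩
    · exact ⟨0, fun h1 h2 h3 => absurd ⟨h1, h2, h3⟩ h⟩
  choose A hA using hA
  -- chosen angles
  let θ : Fin 5 → Fin 5 → ℂ := fun i j =>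
    if i < j then Complex.log (p j - p i) else Complex.log (p i - p j) + Real.pi * Complex.I
  have hθ : ∀ i j, i ≠ j → Complex.exp (θ i j) = p j - p i := by
    intro i j hij
    by_cases h : i < j
    · simp only [θ, if_pos h]
      rw [Complex.exp_log (sub_ne_zero.mpr (hpne _ _ hij.symm))]
    · simp only [θ, if_neg h]
      rw [Complex.exp_add, Complex.exp_log (sub_ne_zero.mpr (hpne _ _ hij)),
        Complex.exp_pi_mul_I]; ring
  have hn : ∀ m i j : Fin 5, ∃ n : ℤ, i < j → m ≠ i → m ≠ j →
      A m i j = θ m j - θ m i + n * (2 * Real.pi * Complex.I) := by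
    intro m i j
    by_cases h : i < j ∧ m ≠ i ∧ m ≠ j
    · obtain ⟨h1, h2, h3⟩ := h
      have := (hA m i j h1 h2 h3).exp_eq
      rw [← hθ m i h2, ← hθ m j h3, ← Complex.exp_sub, Complex.exp_eq_exp_iff_exists_int] at this
      obtain ⟨n, hn⟩ := this
      exact ⟨n, fun _ _ _ => hn⟩
    · exact ⟨0, fun h1 h2 h3 => absurd ⟨h1, h2, h3⟩ h⟩
  choose n hn using hn
  let s : Fin 5 → Fin 5 → ℤ := fun i j => if i < j then -1 else 1
  have hs : ∀ i j, i ≠ j → θ i j - θ j i = s i j * (Real.pi * Complex.I) := by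
    intro i j hij
    rcases lt_or_gt_of_ne hij with h | h
    · simp [θ, s, h, h.not_gt]
    · simp [θ, s, h, h.not_gt]
  have key : ∀ i j k l : Fin 5, i < j → k < l → i ≠ k → i ≠ l → j ≠ k → j ≠ l →
      2 * (n j k l - n i k l - n l i j + n k i j) + (s j l + s k j + s l i + s i k) = 0 := by
    intro i j k l hij hkl hik hil hjk hjl
    have h1 := turn_square (γ i j) (γ k l) (hdis i j k l hij hkl hik hil hjk hjl)
      (hA k i j hij hik.symm hjk.symm) (hA l i j hij hil.symm hjl.symm)
      (hA i k l hkl hik hil) (hA j k l hkl hjk hjl)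
    rw [hn k i j hij hik.symm hjk.symm, hn l i j hij hil.symm hjl.symm,
      hn i k l hkl hik hil, hn j k l hkl hjk hjl] at h1
    have h2 := hs j l hjl
    have h3 := hs k j hjk.symm
    have h4 := hs l i hil.symm
    have h5 := hs i k hik
    have h6 : ((2 * (n j k l - n i k l - n l i j + n k i j) +
        (s j l + s k j + s l i + s i k) : ℤ) : ℂ) * (Real.pi * Complex.I) = 0 := by
      push_cast
      linear_combination h1 - h2 - h3 - h4 - h5
    have hpi : (Real.pi * Complex.I : ℂ) ≠ 0 := by simp [Real.pi_ne_zero]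
    exact_mod_cast (mul_eq_zero.mp h6).resolve_right hpi
  have d1 := key 0 1 2 3 (by decide) (by decide) (by decide) (by decide) (by decide) (by decide)
  have d2 := key 0 2 1 3 (by decide) (by decide) (by decide) (by decide) (by decide) (by decide)
  have d3 := key 0 3 1 2 (by decide) (by decide) (by decide) (by decide) (by decide) (by decide)
  have d4 := key 0 1 2 4 (by decide) (by decide) (by decide) (by decide) (by decide) (by decide)
  have d5 := key 0 2 1 4 (by decide) (by decide) (by decide) (by decide) (by decide) (by decide)
  have d6 := key 0 4 1 2 (by decide) (by decide) (by decide) (by decide) (by decide) (by decide)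
  have d7 := key 0 1 3 4 (by decide) (by decide) (by decide) (by decide) (by decide) (by decide)
  have d8 := key 0 3 1 4 (by decide) (by decide) (by decide) (by decide) (by decide) (by decide)
  have d9 := key 0 4 1 3 (by decide) (by decide) (by decide) (by decide) (by decide) (by decide)
  have d10 := key 0 2 3 4 (by decide) (by decide) (by decide) (by decide) (by decide) (by decide)
  have d11 := key 0 3 2 4 (by decide) (by decide) (by decide) (by decide) (by decide) (by decide)
  have d12 := key 0 4 2 3 (by decide) (by decide) (by decide) (by decide) (by decide) (by decide)
  have d13 := key 1 2 3 4 (by decide) (by decide) (by decide) (by decide) (by decide) (by decide)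
  have d14 := key 1 3 2 4 (by decide) (by decide) (by decide) (by decide) (by decide) (by decide)
  have d15 := key 1 4 2 3 (by decide) (by decide) (by decide) (by decide) (by decide) (by decide)
  simp [s] at d1 d2 d3 d4 d5 d6 d7 d8 d9 d10 d11 d12 d13 d14 d15
  omega


theorem pairs_enum {P : Fin 5 → Fin 5 → Fin 5 → Fin 5 → Prop}
    (hsymm : ∀ i j k l, P i j k l → P k l i j)
    (h : P 0 1 2 3 ∧ P 0 1 2 4 ∧ P 0 1 3 4 ∧ P 0 2 1 3 ∧ P 0 2 1 4 ∧ P 0 2 3 4 ∧ P 0 3 1 2 ∧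
      P 0 3 1 4 ∧ P 0 3 2 4 ∧ P 0 4 1 2 ∧ P 0 4 1 3 ∧ P 0 4 2 3 ∧ P 1 2 3 4 ∧ P 1 3 2 4 ∧
      P 1 4 2 3) :
    ∀ i j k l : Fin 5, i < j → k < l → i ≠ k → i ≠ l → j ≠ k → j ≠ l → P i j k l := by
  obtain ⟨h1, h2, h3, h4, h5, h6, h7, h8, h9, h10, h11, h12, h13, h14, h15⟩ := h
  have main : ∀ i j k l : Fin 5, i < k → i < j → k < l → i ≠ l → j ≠ k → j ≠ l → P i j k l := by
    intro i j k l
    fin_cases i <;> fin_cases k <;> intro a <;>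
      first
      | exact absurd a (by decide)
      | (fin_cases j <;> intro b <;>
          first
          | exact absurd b (by decide)
          | (fin_cases l <;> intro c d e f <;>
              first
              | exact absurd c (by decide)
              | exact absurd rfl d
              | exact absurd rfl e
              | exact absurd rfl f
              | assumption))
  intro i j k l hij hkl hik hil hjk hjl
  rcases lt_or_gt_of_ne hik with h | h
  · exact main i j k l h hij hkl hil hjk hjl
  · exact hsymm _ _ _ _ (main k l i j h hkl hij hjk.symm hil.symm hjl.symm)

theorem joinedIn_sphere_compl (R : ℝ) (hR : 0 < R) :
    IsPreconnected {p : ℝ × ℝ | R ≤ ‖p‖} := by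
  have hrank : 1 < Module.rank ℝ (ℝ × ℝ) := by
    rw [rank_prod', Module.rank_self]; norm_num
  have h := ((isPreconnected_Ici (a := (1 : ℝ))).prod
    (isPreconnected_sphere hrank (0 : ℝ × ℝ) R)).image (fun q => q.1 • q.2) (by fun_prop)
  convert h using 1
  ext p
  constructor
  · intro hp
    replace hp : R ≤ ‖p‖ := hp
    have hp0 : 0 < ‖p‖ := hR.trans_le hp
    refine ⟨(‖p‖ / R, (R / ‖p‖) • p), ⟨(one_le_div hR).mpr hp, ?_⟩, ?_⟩
    · rw [mem_sphere_zero_iff_norm]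
      rw [norm_smul, Real.norm_of_nonneg (by positivity)]; field_simp
    · have e : ‖p‖ / R * (R / ‖p‖) = 1 := by field_simp
      simp only [smul_smul, e, one_smul]
  · rintro ⟨⟨a, b⟩, ⟨ha, hb⟩, rfl⟩
    rw [mem_sphere_zero_iff_norm] at hb
    simp only [mem_Ici] at ha hb
    change R ≤ ‖a • b‖
    rw [norm_smul, Real.norm_of_nonneg (by linarith), hb]
    nlinarith

/-- The union of the unbounded components of the complement of a bounded set is connected. -/
theorem outer_preconnected (C : Set (ℝ × ℝ)) (hC : Bornology.IsBounded C) :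
    IsPreconnected {p : ℝ × ℝ | p ∉ C ∧ ¬ Bornology.IsBounded (connectedComponentIn Cᶜ p)} := by
  obtain ⟨R, hR, hCR⟩ := hC.subset_ball_lt 0 (0 : ℝ × ℝ)
  have hT := joinedIn_sphere_compl R hR
  have hTC : {p : ℝ × ℝ | R ≤ ‖p‖} ⊆ Cᶜ := by
    intro p hp hpC
    have := hCR hpC
    rw [mem_ball_zero_iff] at this
    exact absurd hp (not_le.mpr this)
  have key : ∀ p, p ∉ C → ¬ Bornology.IsBounded (connectedComponentIn Cᶜ p) →
      {p : ℝ × ℝ | R ≤ ‖p‖} ⊆ connectedComponentIn Cᶜ p := by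
    intro p hp hub
    by_contra hcon
    apply hub
    refine (Metric.isBounded_ball (x := (0 : ℝ × ℝ)) (r := R)).subset ?_
    intro q hq
    rw [mem_ball_zero_iff]
    by_contra hqR
    rw [connectedComponentIn_eq hq] at hcon
    exact hcon (hT.subset_connectedComponentIn (not_lt.mp hqR) hTC)
  obtain ⟨t, ht⟩ : ∃ t : ℝ × ℝ, R ≤ ‖t‖ := ⟨(R, 0), by simp [Prod.norm_def, abs_of_pos hR]⟩
  have heq : ∀ p, p ∉ C → ¬ Bornology.IsBounded (connectedComponentIn Cᶜ p) →
      connectedComponentIn Cᶜ p = connectedComponentIn Cᶜ t := fun p hp hub =>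
    connectedComponentIn_eq (key p hp hub ht)
  rcases eq_empty_or_nonempty
    {p : ℝ × ℝ | p ∉ C ∧ ¬ Bornology.IsBounded (connectedComponentIn Cᶜ p)} with h0 | ⟨p₀, hp₀⟩
  · rw [h0]; exact isPreconnected_empty
  have : {p : ℝ × ℝ | p ∉ C ∧ ¬ Bornology.IsBounded (connectedComponentIn Cᶜ p)} =
      connectedComponentIn Cᶜ p₀ := by
    apply Subset.antisymm
    · rintro p ⟨hp, hub⟩
      rw [heq p₀ hp₀.1 hp₀.2, ← heq p hp hub]
      exact mem_connectedComponentIn hp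
    · intro p hp
      refine ⟨connectedComponentIn_subset _ _ hp, ?_⟩
      rw [← connectedComponentIn_eq hp]
      exact hp₀.2
  rw [this]
  exact isPreconnected_connectedComponentIn

theorem outer_open (C : Set (ℝ × ℝ)) (hC : IsClosed C) :
    IsOpen {p : ℝ × ℝ | p ∉ C ∧ ¬ Bornology.IsBounded (connectedComponentIn Cᶜ p)} := by
  rw [isOpen_iff_forall_mem_open]
  rintro p ⟨hp, hub⟩
  refine ⟨connectedComponentIn Cᶜ p, ?_, hC.isOpen_compl.connectedComponentIn,
    mem_connectedComponentIn hp⟩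
  intro q hq
  refine ⟨connectedComponentIn_subset _ _ hq, ?_⟩
  rw [← connectedComponentIn_eq hq]
  exact hub

/-! ### Combinatorial part -/

variable {W : Type}

/-- `u` and `v` are adjacent vertices of `U`. -/
def Lnk (H : SimpleGraph W) (U : Set W) (u v : W) : Prop := H.Adj u v ∧ u ∈ U ∧ v ∈ U

/-- `u` and `v` are joined inside `U`. -/
def Conn (H : SimpleGraph W) (U : Set W) : W → W → Prop := Relation.ReflTransGen (Lnk H U)

theorem Conn.symm {H : SimpleGraph W} {U : Set W} {u v : W} (h : Conn H U u v) : Conn H U v u := by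
  induction h with
  | refl => exact Relation.ReflTransGen.refl
  | tail _ h ih => exact Relation.ReflTransGen.head ⟨h.1.symm, h.2.2, h.2.1⟩ ih

theorem Conn.mono {H : SimpleGraph W} {U U' : Set W} (hU : U ⊆ U') {u v : W}
    (h : Conn H U u v) : Conn H U' u v := by
  induction h with
  | refl => exact Relation.ReflTransGen.refl
  | tail _ h ih => exact Relation.ReflTransGen.tail ih ⟨h.1, hU h.2.1, hU h.2.2⟩

theorem Conn.mem {H : SimpleGraph W} {U : Set W} {u v : W} (h : Conn H U u v) (hu : u ∈ U) :
    v ∈ U := by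
  induction h with
  | refl => exact hu
  | tail _ h _ => exact h.2.2

/-- No weak `K₅`: five vertices cannot be pairwise joined such that independent connections are
disjoint. -/
def NoK5 (H : SimpleGraph W) : Prop :=
  ∀ (p : Fin 5 → W) (E : Fin 5 → Fin 5 → Set W),
    (∀ i j, i < j → p i ≠ p j ∧ Conn H (E i j) (p i) (p j)) →
    (∀ i j k l : Fin 5, i < j → k < l → i ≠ k → i ≠ l → j ≠ k → j ≠ l →
      Disjoint (E i j) (E k l)) → False

/-- `v` has a neighbour in `Z`. -/
def Nb (H : SimpleGraph W) (Z : Set W) (v : W) : Prop := ∃ z ∈ Z, H.Adj z v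

/-- The vertex set `A` is colorable from `L`. -/
def Col (H : SimpleGraph W) (A : Finset W) (L : W → Finset ℕ) : Prop :=
  ∃ c : W → ℕ, (∀ v ∈ A, c v ∈ L v) ∧ ∀ u ∈ A, ∀ v ∈ A, H.Adj u v → c u ≠ c v

/-- The root set is nonempty, connected and avoids `A`. -/
def Setup (H : SimpleGraph W) (Z : Set W) (A : Finset W) : Prop :=
  Z.Nonempty ∧ (∀ a ∈ Z, ∀ b ∈ Z, Conn H Z a b) ∧ ∀ a ∈ Z, a ∉ A

/-- The list of `v` is large enough. -/
def Good (H : SimpleGraph W) (Z : Set W) (L : W → Finset ℕ) (v : W) : Prop :=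
  5 ≤ (L v).card ∨ (Nb H Z v ∧ 3 ≤ (L v).card)

variable {H : SimpleGraph W}

theorem conn_insert {Z : Set W} (hZ : ∀ a ∈ Z, ∀ b ∈ Z, Conn H Z a b) {v : W} (hv : Nb H Z v)
    {a : W} (ha : a ∈ Z) : Conn H (insert v Z) a v := by
  obtain ⟨z, hz, hzv⟩ := hv
  exact ((hZ a ha z hz).mono (subset_insert _ _)).tail ⟨hzv, Or.inr hz, Or.inl rfl⟩

open Classical in
theorem Setup.insert {Z : Set W} {A : Finset W} (h : Setup H Z A) {v : W} (hv : Nb H Z v) :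
    Setup H (insert v Z) (A.erase v) := by
  obtain ⟨h1, h2, h3⟩ := h
  refine ⟨⟨v, Or.inl rfl⟩, ?_, ?_⟩
  · rintro a (rfl | ha) b (rfl | hb)
    · exact Relation.ReflTransGen.refl
    · exact (conn_insert h2 hv hb).symm
    · exact conn_insert h2 hv ha
    · exact (h2 a ha b hb).mono (subset_insert _ _)
  · rintro a (rfl | ha)
    · simp
    · exact fun h => h3 a ha (Finset.mem_of_mem_erase h)

theorem Setup.mono {Z : Set W} {A B : Finset W} (h : Setup H Z A) (hB : B ⊆ A) : Setup H Z B :=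
  ⟨h.1, h.2.1, fun a ha hb => h.2.2 a ha (hB hb)⟩

theorem Nb.insert {Z : Set W} {u v : W} (h : Nb H Z u) : Nb H (insert v Z) u := by
  obtain ⟨z, hz, h⟩ := h
  exact ⟨z, Or.inr hz, h⟩

open Classical in
theorem Col.extend {A : Finset W} {L L' : W → Finset ℕ} {w : W}
    (h : Col H (A.erase w) L') (hL : ∀ u, L' u ⊆ L u)
    (hc : ∀ c : W → ℕ, (∀ v ∈ A.erase w, c v ∈ L' v) →
      ∃ d ∈ L w, ∀ u ∈ A.erase w, H.Adj w u → c u ≠ d) : Col H A L := by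
  obtain ⟨c, h1, h2⟩ := h
  obtain ⟨d, hd, hd'⟩ := hc c h1
  refine ⟨fun v => if v = w then d else c v, ?_, ?_⟩
  · intro v hv
    by_cases hvw : v = w
    · subst hvw; simpa using hd
    · simp only [if_neg hvw]
      exact hL _ (h1 v (Finset.mem_erase.mpr ⟨hvw, hv⟩))
  · intro u hu v hv huv
    by_cases huw : u = w
    · subst huw
      have hvu : v ≠ u := huv.ne'
      simp only [if_neg hvu, if_true]
      exact (hd' v (Finset.mem_erase.mpr ⟨hvu, hv⟩) huv).symm
    · by_cases hvw : v = w
      · subst hvw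
        simp only [if_neg huw, if_true]
        exact hd' u (Finset.mem_erase.mpr ⟨huw, hu⟩) huv.symm
      · simp only [if_neg huw, if_neg hvw]
        exact h2 u (Finset.mem_erase.mpr ⟨huw, hu⟩) v (Finset.mem_erase.mpr ⟨hvw, hv⟩) huv

def M0 (H : SimpleGraph W) (A : Finset W) : Prop := ∀ (Z : Set W) (L : W → Finset ℕ),
  Setup H Z A → (∀ v ∈ A, Good H Z L v) → Col H A L

def M1 (H : SimpleGraph W) (A : Finset W) : Prop := ∀ (Z : Set W) (L : W → Finset ℕ) (x : W)
  (cx : ℕ), Setup H Z A → x ∈ A → Nb H Z x → L x = {cx} →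
  (∀ v ∈ A, v ≠ x → Good H Z L v) → Col H A L

def M2 (H : SimpleGraph W) (A : Finset W) : Prop := ∀ (Z : Set W) (L : W → Finset ℕ) (x y : W)
  (cx cy : ℕ), Setup H Z A → x ∈ A → y ∈ A → H.Adj x y → Nb H Z x → Nb H Z y →
  L x = {cx} → L y = {cy} → cx ≠ cy →
  (∀ v ∈ A, v ≠ x → v ≠ y → Good H Z L v) → Col H A L

open Classical in
/-- lists after deleting a vertex `w` of color `c` -/
def del (H : SimpleGraph W) (L : W → Finset ℕ) (w : W) (c : ℕ) (u : W) : Finset ℕ :=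
  if H.Adj w u then (L u).erase c else L u

theorem del_subset (L : W → Finset ℕ) (w : W) (c : ℕ) (u : W) : del H L w c u ⊆ L u := by
  unfold del; split_ifs
  · exact Finset.erase_subset _ _
  · exact subset_rfl

theorem Good.del {Z Z' : Set W} {L : W → Finset ℕ} {w : W} {c : ℕ} {u : W} (h : Good H Z L u)
    (hZ : Nb H Z u → Nb H Z' u ∧ ¬ H.Adj w u) (hw : w ∈ Z') : Good H Z' (del H L w c) u := by
  have := Finset.pred_card_le_card_erase (s := L u) (a := c)
  unfold Good Thomassen.del
  by_cases hwu : H.Adj w u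
  · simp only [if_pos hwu]
    rcases h with h | h
    · exact Or.inr ⟨⟨w, hw, hwu⟩, by omega⟩
    · exact absurd hwu (hZ h.1).2
  · simp only [if_neg hwu]
    rcases h with h | h
    · exact Or.inl h
    · exact Or.inr ⟨(hZ h.1).1, h.2⟩

open Classical in
theorem Col.of_del {A : Finset W} {L : W → Finset ℕ} {w : W} {d : ℕ} (hd : d ∈ L w)
    (h : Col H (A.erase w) (del H L w d)) : Col H A L := by
  refine h.extend (del_subset L w d) fun c hc => ⟨d, hd, fun u hu hwu hcu => ?_⟩
  have := hc u hu
  rw [del, if_pos hwu, hcu] at this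
  simp at this

open Classical in
theorem step_M0 {A : Finset W} (ih : ∀ B : Finset W, B.card < A.card → M0 H B)
    (h1 : M1 H A) : M0 H A := by
  intro Z L hS hG
  by_cases hA : A = ∅
  · subst hA
    exact ⟨fun _ => 0, by simp, by simp⟩
  by_cases hN : ∃ x ∈ A, Nb H Z x
  · obtain ⟨x, hx, hNx⟩ := hN
    obtain ⟨cx, hcx⟩ : (L x).Nonempty := by
      rw [← Finset.card_pos]
      rcases hG x hx with h | h <;> omega
    obtain ⟨c, hc1, hc2⟩ := h1 Z (Function.update L x {cx}) x cx hS hx hNx (by simp) (by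
      intro v hv hvx
      have := hG v hv
      simpa [Good, hvx] using this)
    refine ⟨c, fun v hv => ?_, hc2⟩
    have := hc1 v hv
    by_cases hvx : v = x
    · subst hvx
      simp at this
      rwa [this]
    · simpa [hvx] using this
  · push Not at hN
    obtain ⟨w, hw⟩ := Finset.nonempty_iff_ne_empty.mpr hA
    have h5 : ∀ v ∈ A, 5 ≤ (L v).card := fun v hv => (hG v hv).resolve_right fun h => hN v hv h.1
    obtain ⟨d, hd⟩ : (L w).Nonempty := by
      rw [← Finset.card_pos]
      have := h5 w hw
      omega
    refine Col.of_del hd (ih _ (Finset.card_erase_lt_of_mem hw) {w} _ ⟨⟨w, rfl⟩, ?_, ?_⟩ ?_)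
    · rintro a rfl b rfl
      exact Relation.ReflTransGen.refl
    · rintro a rfl; simp
    · intro v hv
      have hv' := Finset.mem_of_mem_erase hv
      exact Good.del (hG v hv') (fun h => absurd h (hN v hv')) rfl

open Classical in
theorem step_M1 {A : Finset W} (ih : ∀ B : Finset W, B.card < A.card → M0 H B)
    (h2 : M2 H A) : M1 H A := by
  intro Z L x cx hS hx hNx hLx hG
  by_cases hN : ∃ y ∈ A, H.Adj x y ∧ Nb H Z y
  · obtain ⟨y, hy, hxy, hNy⟩ := hN
    have hyx : y ≠ x := hxy.ne'
    obtain ⟨cy, hcy⟩ : ((L y).erase cx).Nonempty := by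
      rw [← Finset.card_pos]
      have := Finset.pred_card_le_card_erase (s := L y) (a := cx)
      rcases hG y hy hyx with h | h <;> omega
    rw [Finset.mem_erase] at hcy
    obtain ⟨c, hc1, hc2⟩ := h2 Z (Function.update L y {cy}) x y cx cy hS hx hy hxy hNx hNy
      (by simp [hyx.symm, hLx]) (by simp) hcy.1.symm (by
      intro v hv hvx hvy
      have := hG v hv hvx
      simpa [Good, hvy] using this)
    refine ⟨c, fun v hv => ?_, hc2⟩
    have := hc1 v hv
    by_cases hvy : v = y
    · subst hvy
      simp at this
      rw [this]; exact hcy.2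
    · simpa [hvy] using this
  · push Not at hN
    refine Col.of_del (w := x) (d := cx) (by simp [hLx])
      (ih _ (Finset.card_erase_lt_of_mem hx) (insert x Z) _ (hS.insert hNx) ?_)
    intro v hv
    rw [Finset.mem_erase] at hv
    exact Good.del (hG v hv.2 hv.1) (fun h => ⟨h.insert, fun h' => hN v hv.2 h' h⟩) (Or.inl rfl)

open Classical in
/-- Splitting along a chord. -/
theorem split_chord {A : Finset W} (ih : ∀ B : Finset W, B.card < A.card → M2 H B)
    {Z : Set W} {L : W → Finset ℕ} {x y : W} {cx cy : ℕ} (hS : Setup H Z A) (hx : x ∈ A)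
    (hy : y ∈ A) (hxy : H.Adj x y) (hNx : Nb H Z x) (hNy : Nb H Z y) (hLx : L x = {cx})
    (hLy : L y = {cy}) (hcxy : cx ≠ cy) (hG : ∀ v ∈ A, v ≠ x → v ≠ y → Good H Z L v)
    {u v : W} (hu : u ∈ A) (hv : v ∈ A) (huv : H.Adj u v) (hNu : Nb H Z u) (hNv : Nb H Z v)
    (hvx : v ≠ x) (hvy : v ≠ y) {a b : W} (ha : a ∈ A) (hb : b ∈ A) (hau : a ≠ u) (hav : a ≠ v)
    (hbu : b ≠ u) (hbv : b ≠ v) (hab : ¬ Conn H ((A : Set W) \ {u, v}) a b) : Col H A L := by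
  obtain ⟨t, htA, htu, htv, ht⟩ : ∃ t ∈ A, t ≠ u ∧ t ≠ v ∧
      ∀ w, (w = x ∨ w = y) → w = t ∨ w = u ∨ H.Adj t w := by
    by_cases hxu : x = u
    · refine ⟨y, hy, ?_, hvy.symm, ?_⟩
      · rw [← hxu]; exact hxy.ne'
      · rintro w (rfl | rfl)
        · exact Or.inr (Or.inl hxu)
        · exact Or.inl rfl
    · refine ⟨x, hx, hxu, hvx.symm, ?_⟩
      rintro w (rfl | rfl)
      · exact Or.inl rfl
      · exact Or.inr (Or.inr hxy)
  set U : Set W := (A : Set W) \ {u, v} with hU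
  have htU : t ∈ U := by simp [hU, htA, htu, htv]
  set K : Finset W := A.filter (fun w => Conn H U t w) with hK
  have hKU : ∀ w ∈ K, w ∈ U := fun w hw => Conn.mem (Finset.mem_filter.mp hw).2 htU
  have hKA : K ⊆ A := Finset.filter_subset _ _
  have htK : t ∈ K := Finset.mem_filter.mpr ⟨htA, Relation.ReflTransGen.refl⟩
  have huK : u ∉ K := fun h => by simpa [hU] using hKU u h
  have hvK : v ∉ K := fun h => by simpa [hU] using hKU v h
  have hclosed : ∀ w ∈ K, ∀ w' ∈ A, H.Adj w w' → w' ≠ u → w' ≠ v → w' ∈ K := by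
    intro w hw w' hw' hadj h1 h2
    refine Finset.mem_filter.mpr ⟨hw', (Finset.mem_filter.mp hw).2.tail ⟨hadj, hKU w hw, ?_⟩⟩
    simp [hU, hw', h1, h2]
  have hxyK : ∀ w, (w = x ∨ w = y) → w ∈ K ∨ w = u := by
    intro w hw
    have hwA : w ∈ A := by rcases hw with rfl | rfl <;> assumption
    have hwv : w ≠ v := by rcases hw with rfl | rfl; exacts [hvx.symm, hvy.symm]
    by_cases hwu : w = u
    · exact Or.inr hwu
    rcases ht w hw with h | h | h
    · exact Or.inl (h ▸ htK)
    · exact Or.inr h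
    · exact Or.inl (hclosed t htK w hwA h hwu hwv)
  set A1 : Finset W := insert u (insert v K) with hA1
  have hA1A : A1 ⊆ A := by
    intro w hw
    simp only [hA1, Finset.mem_insert] at hw
    rcases hw with rfl | rfl | hw
    exacts [hu, hv, hKA hw]
  have hA1lt : A1.card < A.card := by
    apply Finset.card_lt_card
    refine ⟨hA1A, fun hsub => hab ?_⟩
    have h1 := hsub ha
    have h2 := hsub hb
    simp only [hA1, Finset.mem_insert, hau, hav, hbu, hbv, false_or, hK, Finset.mem_filter]
      at h1 h2
    exact h1.2.symm.trans h2.2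
  have hA2lt : (A \ K).card < A.card := by
    apply Finset.card_lt_card
    refine ⟨Finset.sdiff_subset, fun hsub => ?_⟩
    exact (Finset.mem_sdiff.mp (hsub htA)).2 htK
  have hinA1 : ∀ w, (w = x ∨ w = y) → w ∈ A1 := by
    intro w hw
    simp only [hA1, Finset.mem_insert]
    rcases hxyK w hw with h | h
    · exact Or.inr (Or.inr h)
    · exact Or.inl h
  obtain ⟨c1, hc1, hc1'⟩ := ih A1 hA1lt Z L x y cx cy (hS.mono hA1A) (hinA1 x (Or.inl rfl))
    (hinA1 y (Or.inr rfl)) hxy hNx hNy hLx hLy hcxy (fun w hw => hG w (hA1A hw))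
  have huA1 : u ∈ A1 := by simp [hA1]
  have hvA1 : v ∈ A1 := by simp [hA1]
  have hKA1 : ∀ w ∈ K, w ∈ A1 := fun w hw => by simp [hA1, hw]
  have hvu : v ≠ u := huv.ne'
  obtain ⟨c2, hc2, hc2'⟩ := ih (A \ K) hA2lt Z
    (Function.update (Function.update L u {c1 u}) v {c1 v}) u v (c1 u) (c1 v)
    (hS.mono Finset.sdiff_subset) (Finset.mem_sdiff.mpr ⟨hu, huK⟩) (Finset.mem_sdiff.mpr ⟨hv, hvK⟩)
    huv hNu hNv (by simp [hvu.symm]) (by simp) (hc1' u huA1 v hvA1 huv) (by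
      intro w hw hwu hwv
      rw [Finset.mem_sdiff] at hw
      have hn : ¬ (w = x ∨ w = y) := fun h => (hxyK w h).elim hw.2 hwu
      push Not at hn
      have := hG w hw.1 hn.1 hn.2
      simpa [Good, hwu, hwv] using this)
  have e1 : c2 u = c1 u := by
    have := hc2 u (Finset.mem_sdiff.mpr ⟨hu, huK⟩)
    simpa [hvu.symm] using this
  have e2 : c2 v = c1 v := by
    have := hc2 v (Finset.mem_sdiff.mpr ⟨hv, hvK⟩)
    simpa using this
  have hcross : ∀ w ∈ K, ∀ w' ∈ A, w' ∉ K → H.Adj w w' → c1 w ≠ c2 w' := by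
    intro w hw w' hw' hw'K hadj
    by_cases h1 : w' = u
    · subst h1; rw [e1]; exact hc1' w (hKA1 w hw) w' huA1 hadj
    by_cases h2 : w' = v
    · subst h2; rw [e2]; exact hc1' w (hKA1 w hw) w' hvA1 hadj
    exact absurd (hclosed w hw w' hw' hadj h1 h2) hw'K
  refine ⟨fun w => if w ∈ K then c1 w else c2 w, ?_, ?_⟩
  · intro w hw
    by_cases hwK : w ∈ K
    · simp only [if_pos hwK]; exact hc1 w (hKA1 w hwK)
    · simp only [if_neg hwK]
      by_cases h1 : w = u
      · subst h1; rw [e1]; exact hc1 w huA1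
      by_cases h2 : w = v
      · subst h2; rw [e2]; exact hc1 w hvA1
      have := hc2 w (Finset.mem_sdiff.mpr ⟨hw, hwK⟩)
      simpa [h1, h2] using this
  · intro w hw w' hw' hadj
    by_cases h1 : w ∈ K <;> by_cases h2 : w' ∈ K <;> simp only [h1, h2, if_true, if_false]
    · exact hc1' w (hKA1 w h1) w' (hKA1 w' h2) hadj
    · exact hcross w h1 w' hw' h2 hadj
    · exact (hcross w' h2 w hw h1 hadj.symm).symm
    · exact hc2' w (Finset.mem_sdiff.mpr ⟨hw, h1⟩) w' (Finset.mem_sdiff.mpr ⟨hw', h2⟩) hadj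

/-- A vertex near the root cannot have three neighbours near the root that are pairwise joined
avoiding the third. -/
theorem no_three (hK5 : NoK5 H) {Z : Set W} {A : Finset W} (hS : Setup H Z A) {v a b c : W}
    (hv : v ∈ A) (ha : a ∈ A) (hb : b ∈ A) (hc : c ∈ A)
    (hNv : Nb H Z v) (hNa : Nb H Z a) (hNb : Nb H Z b) (hNc : Nb H Z c)
    (hva : H.Adj v a) (hvb : H.Adj v b) (hvc : H.Adj v c)
    (hab : a ≠ b) (hac : a ≠ c) (hbc : b ≠ c)
    (h1 : Conn H ((A : Set W) \ {c, v}) a b) (h2 : Conn H ((A : Set W) \ {b, v}) a c)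
    (h3 : Conn H ((A : Set W) \ {a, v}) b c) : False := by
  obtain ⟨⟨z, hz⟩, hZ, hd⟩ := hS
  have hzA := hd z hz
  have hne : ∀ w ∈ A, z ≠ w := fun w hw h => hzA (h ▸ hw)
  have hZv : ∀ w ∈ A, w ∉ Z := fun w hw h => hd w h hw
  have hpair : ∀ w, H.Adj v w → Conn H {v, w} v w := fun w h =>
    Relation.ReflTransGen.single ⟨h, by simp, by simp⟩
  have D1 : ∀ w ∈ A, ∀ w' ∈ A, ∀ w'' ∈ A, w ≠ w' → w ≠ w'' →
      Disjoint (insert w Z) ({w', w''} : Set W) := by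
    intro w hw w' hw' w'' hw'' h h'
    rw [Set.disjoint_left]
    rintro q (rfl | hq) (rfl | hq')
    · exact h rfl
    · exact h' hq'
    · exact hZv _ hw' hq
    · exact hZv _ hw'' (hq' ▸ hq)
  have D2 : ∀ w, ∀ T : Set W, w ∈ T → Disjoint (insert w Z) ((A : Set W) \ T) := by
    intro w T hT
    rw [Set.disjoint_left]
    rintro q (rfl | hq) ⟨h, h'⟩
    · exact h' hT
    · exact hZv _ h hq
  have D3 : ∀ w, Disjoint ({v, w} : Set W) ((A : Set W) \ {w, v}) := by
    intro w
    rw [Set.disjoint_left]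
    rintro q (rfl | hq) ⟨_, h'⟩
    · exact h' (by simp)
    · exact h' (Or.inl hq)
  refine hK5 ![z, v, a, b, c]
    ![![∅, insert v Z, insert a Z, insert b Z, insert c Z],
      ![∅, ∅, {v, a}, {v, b}, {v, c}],
      ![∅, ∅, ∅, (A : Set W) \ {c, v}, (A : Set W) \ {b, v}],
      ![∅, ∅, ∅, ∅, (A : Set W) \ {a, v}],
      ![∅, ∅, ∅, ∅, ∅]] ?_ (pairs_enum (fun i j k l h => h.symm) ?_)
  · intro i j hij
    fin_cases i <;> fin_cases j <;> first
      | exact absurd hij (by decide)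
      | exact ⟨hne v hv, conn_insert hZ hNv hz⟩
      | exact ⟨hne a ha, conn_insert hZ hNa hz⟩
      | exact ⟨hne b hb, conn_insert hZ hNb hz⟩
      | exact ⟨hne c hc, conn_insert hZ hNc hz⟩
      | exact ⟨hva.ne, hpair a hva⟩
      | exact ⟨hvb.ne, hpair b hvb⟩
      | exact ⟨hvc.ne, hpair c hvc⟩
      | exact ⟨hab, h1⟩
      | exact ⟨hac, h2⟩
      | exact ⟨hbc, h3⟩
  · refine ⟨D2 v _ (by simp), D2 v _ (by simp), D2 v _ (by simp),
      D1 a ha v hv b hb hva.ne' hab, D1 a ha v hv c hc hva.ne' hac, D2 a _ (by simp),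
      D1 b hb v hv a ha hvb.ne' hab.symm, D1 b hb v hv c hc hvb.ne' hbc, D2 b _ (by simp),
      D1 c hc v hv a ha hvc.ne' hac.symm, D1 c hc v hv b hb hvc.ne' hbc.symm, D2 c _ (by simp),
      D3 a, D3 b, D3 c⟩

open Classical in
theorem step_M2 (hK5 : NoK5 H) {A : Finset W} (ih1 : ∀ B : Finset W, B.card < A.card → M1 H B)
    (ih : ∀ B : Finset W, B.card < A.card → M2 H B) : M2 H A := by
  intro Z L x y cx cy hS hx hy hxy hNx hNy hLx hLy hcxy hG
  by_cases hN : ∃ v ∈ A, v ≠ y ∧ H.Adj x v ∧ Nb H Z v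
  swap
  · push Not at hN
    refine Col.of_del (w := x) (d := cx) (by simp [hLx])
      (ih1 _ (Finset.card_erase_lt_of_mem hx) (insert x Z) _ y cy (hS.insert hNx)
        (Finset.mem_erase.mpr ⟨hxy.ne', hy⟩) hNy.insert ?_ ?_)
    · rw [del, if_pos hxy, hLy, Finset.erase_eq_of_notMem (by simpa using hcxy)]
    · intro v hv hvy
      rw [Finset.mem_erase] at hv
      exact Good.del (hG v hv.2 hv.1 hvy) (fun h => ⟨h.insert, fun h' => hN v hv.2 hvy h' h⟩)
        (Or.inl rfl)
  obtain ⟨v, hv, hvy, hxv, hNv⟩ := hN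
  have hvx : v ≠ x := hxv.ne'
  by_cases h2 : ∃ b ∈ A, ∃ c ∈ A, Nb H Z b ∧ Nb H Z c ∧ H.Adj v b ∧ H.Adj v c ∧ b ≠ x ∧ c ≠ x ∧
      b ≠ c
  · obtain ⟨b, hb, c, hc, hNb, hNc, hvb, hvc, hbx, hcx, hbc⟩ := h2
    have split := @split_chord W H A ih Z L x y cx cy hS hx hy hxy hNx hNy hLx hLy hcxy hG
    by_cases h1 : Conn H ((A : Set W) \ {c, v}) x b
    swap
    · exact split hc hv hvc.symm hNc hNv hvx hvy hx hb hcx.symm hvx.symm hbc hvb.ne' h1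
    by_cases h2 : Conn H ((A : Set W) \ {b, v}) x c
    swap
    · exact split hb hv hvb.symm hNb hNv hvx hvy hx hc hbx.symm hvx.symm hbc.symm hvc.ne' h2
    by_cases h3 : Conn H ((A : Set W) \ {x, v}) b c
    swap
    · exact split hx hv hxv hNx hNv hvx hvy hb hc hbx hvb.ne' hcx hvc.ne' h3
    exact (no_three hK5 hS hv hx hb hc hNv hNx hNb hNc hxv.symm hvb hvc hbx.symm hcx.symm hbc
      h1 h2 h3).elim
  · have huniq : ∀ b ∈ A, ∀ c ∈ A, Nb H Z b → Nb H Z c → H.Adj v b → H.Adj v c → b ≠ x → c ≠ x →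
        b = c := by
      intro b hb c hc h3 h4 h5 h6 h7 h8
      by_contra h9
      exact h2 ⟨b, hb, c, hc, h3, h4, h5, h6, h7, h8, h9⟩
    have hcard : 1 < ((L v).erase cx).card := by
      have := Finset.pred_card_le_card_erase (s := L v) (a := cx)
      rcases hG v hv hvx hvy with h | h <;> omega
    obtain ⟨d1, hd1, d2, hd2, hd12⟩ := Finset.one_lt_card.mp hcard
    rw [Finset.mem_erase] at hd1 hd2
    set L' : W → Finset ℕ := fun u => if H.Adj v u ∧ ¬ Nb H Z u then L u \ {d1, d2} else L u
      with hL'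
    have hxL : L' x = {cx} := by simp [hL', hNx, hLx]
    have hyL : L' y = {cy} := by simp [hL', hNy, hLy]
    have hcol : Col H (A.erase v) L' := by
      refine ih _ (Finset.card_erase_lt_of_mem hv) (insert v Z) L' x y cx cy (hS.insert hNv)
        (Finset.mem_erase.mpr ⟨hvx.symm, hx⟩) (Finset.mem_erase.mpr ⟨hvy.symm, hy⟩) hxy
        hNx.insert hNy.insert hxL hyL hcxy ?_
      intro u hu hux huy
      rw [Finset.mem_erase] at hu
      have hg := hG u hu.2 hux huy
      by_cases h : H.Adj v u ∧ ¬ Nb H Z u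
      · have h5 : 5 ≤ (L u).card := hg.resolve_right fun h' => h.2 h'.1
        right
        refine ⟨⟨v, Or.inl rfl, h.1⟩, ?_⟩
        simp only [hL', if_pos h]
        have e1 := Finset.le_card_sdiff {d1, d2} (L u)
        have e2 := Finset.card_le_two (a := d1) (b := d2)
        omega
      · have : L' u = L u := by simp only [hL', if_neg h]
        unfold Good
        rw [this]
        exact hg.imp id fun h => ⟨h.1.insert, h.2⟩
    refine hcol.extend ?_ ?_
    · intro u
      simp only [hL']
      split_ifs
      · exact Finset.sdiff_subset
      · exact subset_rfl
    intro c hc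
    have hfar : ∀ u ∈ A.erase v, H.Adj v u → ¬ Nb H Z u → c u ≠ d1 ∧ c u ≠ d2 := by
      intro u hu h h'
      have := hc u hu
      simp only [hL', h, h', not_false_eq_true, and_self, if_true, Finset.mem_sdiff,
        Finset.mem_insert, Finset.mem_singleton, not_or] at this
      exact this.2
    have hcx : c x = cx := by
      have := hc x (Finset.mem_erase.mpr ⟨hvx.symm, hx⟩)
      rw [hxL] at this
      simpa using this
    obtain ⟨d, hd, hdd⟩ : ∃ d, (d = d1 ∨ d = d2) ∧
        ∀ b ∈ A, Nb H Z b → H.Adj v b → b ≠ x → c b ≠ d := by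
      by_cases hb : ∃ b ∈ A, Nb H Z b ∧ H.Adj v b ∧ b ≠ x
      · obtain ⟨b, hb, h1, h2, h3⟩ := hb
        by_cases hcb : c b = d1
        · refine ⟨d2, Or.inr rfl, fun b' hb' h1' h2' h3' => ?_⟩
          rw [huniq b' hb' b hb h1' h1 h2' h2 h3' h3, hcb]
          exact hd12
        · refine ⟨d1, Or.inl rfl, fun b' hb' h1' h2' h3' => ?_⟩
          rw [huniq b' hb' b hb h1' h1 h2' h2 h3' h3]
          exact hcb
      · exact ⟨d1, Or.inl rfl, fun b h1 h2 h3 h4 => absurd ⟨b, h1, h2, h3, h4⟩ hb⟩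
    refine ⟨d, by rcases hd with rfl | rfl; exacts [hd1.2, hd2.2], fun u hu hvu => ?_⟩
    by_cases hux : u = x
    · rw [hux, hcx]
      rcases hd with rfl | rfl
      exacts [hd1.1.symm, hd2.1.symm]
    by_cases hNu : Nb H Z u
    · exact hdd u (Finset.mem_of_mem_erase hu) hNu hvu hux
    · have := hfar u hu hvu hNu
      rcases hd with rfl | rfl
      exacts [this.1, this.2]

theorem main_comb (hK5 : NoK5 H) (n : ℕ) :
    ∀ A : Finset W, A.card = n → M0 H A ∧ M1 H A ∧ M2 H A := by
  induction n using Nat.strong_induction_on with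
  | _ n ih =>
    rintro A rfl
    have h2 : M2 H A := step_M2 hK5 (fun B hB => (ih _ hB B rfl).2.1)
      (fun B hB => (ih _ hB B rfl).2.2)
    have h1 : M1 H A := step_M1 (fun B hB => (ih _ hB B rfl).1) h2
    exact ⟨step_M0 (fun B hB => (ih _ hB B rfl).1) h1, h1, h2⟩

/-! ### From drawings to the combinatorial statement -/

theorem van_kampen_plane (p : Fin 5 → ℝ × ℝ) (E : Fin 5 → Fin 5 → Set (ℝ × ℝ))
    (hE : ∀ i j, i < j → JoinedIn (E i j) (p i) (p j))
    (hdis : ∀ i j k l : Fin 5, i < j → k < l → i ≠ k → i ≠ l → j ≠ k → j ≠ l →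
      Disjoint (E i j) (E k l)) : False := by
  let φ := Complex.equivRealProdCLM.symm
  have hφ : ∀ i j : Fin 5, ∃ γ : Path (φ (p i)) (φ (p j)), i < j → range γ ⊆ φ '' E i j := by
    intro i j
    by_cases h : i < j
    · refine ⟨(hE i j h).somePath.map φ.continuous, fun _ => ?_⟩
      rintro _ ⟨t, rfl⟩
      exact ⟨_, (hE i j h).somePath_mem t, rfl⟩
    · exact ⟨(PathConnectedSpace.somePath _ _), fun h' => absurd h' h⟩
  choose γ hγ using hφ
  refine van_kampen_complex (fun i => φ (p i)) γ ?_
  intro i j k l h1 h2 h3 h4 h5 h6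
  exact ((Set.disjoint_image_iff φ.injective).mpr (hdis i j k l h1 h2 h3 h4 h5 h6)).mono
    (hγ i j h1) (hγ k l h2)

theorem noK5_of_drawing {W : Type} (H : SimpleGraph W) (q : W → ℝ × ℝ)
    (K : W → W → Set (ℝ × ℝ)) (hK : ∀ u v, H.Adj u v → JoinedIn (K u v) (q u) (q v))
    (hdis : ∀ u v u' v', H.Adj u v → H.Adj u' v' → u ≠ u' → u ≠ v' → v ≠ u' → v ≠ v' →
      Disjoint (K u v) (K u' v')) : NoK5 H := by
  intro p E hE hEd
  let T : Set W → Set (ℝ × ℝ) := fun U => {r | ∃ u v, Lnk H U u v ∧ r ∈ K u v}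
  have hT : ∀ U a b, Conn H U a b → a = b ∨ JoinedIn (T U) (q a) (q b) := by
    intro U a b h
    induction h with
    | refl => exact Or.inl rfl
    | @tail b c _ h ih =>
      have h1 : JoinedIn (T U) (q b) (q c) := (hK b c h.1).mono fun r hr => ⟨b, c, h, hr⟩
      rcases ih with rfl | ih
      · exact Or.inr h1
      · exact Or.inr (ih.trans h1)
  refine van_kampen_plane (fun i => q (p i)) (fun i j => T (E i j)) ?_ ?_
  · intro i j hij
    exact (hT _ _ _ (hE i j hij).2).resolve_left (hE i j hij).1
  · intro i j k l h1 h2 h3 h4 h5 h6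
    have hd := hEd i j k l h1 h2 h3 h4 h5 h6
    rw [Set.disjoint_left] at hd ⊢
    rintro r ⟨u, v, huv, hr⟩ ⟨u', v', huv', hr'⟩
    have hne : ∀ s s', s ∈ E i j → s' ∈ E k l → s ≠ s' := fun s s' hs hs' h => hd hs (h ▸ hs')
    exact (hdis u v u' v' huv.1 huv'.1 (hne _ _ huv.2.1 huv'.2.1) (hne _ _ huv.2.1 huv'.2.2)
      (hne _ _ huv.2.2 huv'.2.1) (hne _ _ huv.2.2 huv'.2.2)).le_bot ⟨hr, hr'⟩

theorem arcs_disjoint {V : Type} {G : SimpleGraph V} (D : Drawing G) (hplane : D.IsPlane)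
    {u v u' v' : V} (h : G.Adj u v) (h' : G.Adj u' v') (h1 : u ≠ u') (h2 : u ≠ v') (h3 : v ≠ u')
    (h4 : v ≠ v') : Disjoint (D.arcSet h) (D.arcSet h') := by
  have hend : ∀ {a b : V} (k : G.Adj a b) (w : V), D.pos w ∈ D.arcSet k → w = a ∨ w = b := by
    rintro a b k w ⟨t, ht⟩
    rcases D.arc_vertex k t w ht with rfl | rfl
    · left; apply D.pos_inj; rw [← ht]; simp
    · right; apply D.pos_inj; rw [← ht]; simp
  have hends : ∀ w, (w = u ∨ w = v) → (w = u' ∨ w = v') → False := by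
    rintro w (rfl | rfl) (rfl | rfl)
    exacts [h1 rfl, h2 rfl, h3 rfl, h4 rfl]
  rw [Set.disjoint_left]
  rintro r ⟨t, ht⟩ hr'
  have hr : r ∈ D.arcSet h := ⟨t, ht⟩
  obtain ⟨t', ht'⟩ := hr'
  have hr' : r ∈ D.arcSet h' := ⟨t', ht'⟩
  by_cases e0 : t = 0
  · subst e0
    have : r = D.pos u := by rw [← ht]; simp
    subst this
    exact hends u (hend h _ hr) (hend h' _ hr')
  by_cases e1 : t = 1
  · subst e1
    have : r = D.pos v := by rw [← ht]; simp
    subst this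
    exact hends v (hend h _ hr) (hend h' _ hr')
  by_cases e0' : t' = 0
  · subst e0'
    have : r = D.pos u' := by rw [← ht']; simp
    subst this
    exact hends u' (hend h _ hr) (hend h' _ hr')
  by_cases e1' : t' = 1
  · subst e1'
    have : r = D.pos v' := by rw [← ht']; simp
    subst this
    exact hends v' (hend h _ hr) (hend h' _ hr')
  refine hplane r ⟨u, v, u', v', h, h', ?_, ⟨t, ⟨e0, e1⟩, ht⟩, ⟨t', ⟨e0', e1'⟩, ht'⟩⟩
  intro hs
  rcases Sym2.eq_iff.mp hs with ⟨h, -⟩ | ⟨h, -⟩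
  exacts [h1 h, h2 h]

theorem pos_notMem_arc {V : Type} {G : SimpleGraph V} (D : Drawing G) {u v w : V}
    (h : G.Adj u v) (h1 : w ≠ u) (h2 : w ≠ v) : D.pos w ∉ D.arcSet h := by
  rintro ⟨t, ht⟩
  rcases D.arc_vertex h t w ht with rfl | rfl
  · exact h1 (D.pos_inj (by rw [← ht]; simp))
  · exact h2 (D.pos_inj (by rw [← ht]; simp))

theorem isCompact_arcSet {V : Type} {G : SimpleGraph V} (D : Drawing G) {u v : V}
    (h : G.Adj u v) : IsCompact (D.arcSet h) := isCompact_range (D.arc h).continuous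

theorem isCompact_graphSet {V : Type} [Fintype V] {G : SimpleGraph V} (D : Drawing G) :
    IsCompact D.graphSet := by
  refine (finite_range _).isCompact.union ?_
  refine isCompact_iUnion fun u => isCompact_iUnion fun v => isCompact_iUnion fun h => ?_
  exact isCompact_arcSet D h

/-- The graph together with a new vertex `none` adjacent to the vertices in `S`. -/
def apex {V : Type} (G : SimpleGraph V) (S : Set V) : SimpleGraph (Option V) where
  Adj a b := match a, b with
    | none, none => False
    | none, some v => v ∈ S
    | some v, none => v ∈ S
    | some u, some v => G.Adj u v
  symm := ⟨by
    rintro (_ | a) (_ | b) h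
    · exact h
    · exact h
    · exact h
    · exact SimpleGraph.Adj.symm (G := G) h⟩
  loopless := ⟨by
    rintro (_ | a) h
    · exact h
    · exact G.loopless.irrefl a h⟩

theorem apex_noK5 {V : Type} [Fintype V] {G : SimpleGraph V} (D : Drawing G) (hplane : D.IsPlane)
    (S : Set V) (hS : ∀ v ∈ S, D.pos v ∈ closure D.outerFace) (hne : D.outerFace.Nonempty) :
    NoK5 (apex G S) := by
  have hcpt := isCompact_graphSet D
  have hO : IsOpen D.outerFace := outer_open _ hcpt.isClosed
  have hconn : IsPreconnected D.outerFace := outer_preconnected _ hcpt.isBounded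
  obtain ⟨z, hz⟩ := hne
  have hball : ∀ v : V, ∃ ε > 0, ∀ (a b : V) (h : G.Adj a b), v ≠ a → v ≠ b →
      Disjoint (Metric.ball (D.pos v) ε) (D.arcSet h) := by
    intro v
    have hc : IsClosed (⋃ (a : V) (b : V) (h : G.Adj a b ∧ v ≠ a ∧ v ≠ b), D.arcSet h.1) := by
      refine IsCompact.isClosed ?_
      exact isCompact_iUnion fun u => isCompact_iUnion fun v => isCompact_iUnion fun h =>
        isCompact_arcSet D h.1
    have hn : D.pos v ∉ ⋃ (a : V) (b : V) (h : G.Adj a b ∧ v ≠ a ∧ v ≠ b), D.arcSet h.1 := by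
      intro hmem
      simp only [mem_iUnion] at hmem
      obtain ⟨a, b, h, hmem⟩ := hmem
      exact pos_notMem_arc D h.1 h.2.1 h.2.2 hmem
    obtain ⟨ε, hε, hsub⟩ := Metric.isOpen_iff.mp hc.isOpen_compl _ hn
    refine ⟨ε, hε, fun a b h h1 h2 => ?_⟩
    rw [Set.disjoint_left]
    intro r hr hr'
    refine hsub hr ?_
    simp only [mem_iUnion]
    exact ⟨a, b, ⟨h, h1, h2⟩, hr'⟩
  choose ε hε hball using hball
  let P : V → Set (ℝ × ℝ) := fun v => D.outerFace ∪ Metric.ball (D.pos v) (ε v)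
  have hP : ∀ v ∈ S, JoinedIn (P v) z (D.pos v) := by
    intro v hv
    have hcon : IsConnected (P v) := by
      refine IsConnected.union ?_ ⟨⟨z, hz⟩, hconn⟩ (Metric.isConnected_ball (hε v))
      obtain ⟨w, hw, hw'⟩ := Metric.mem_closure_iff.mp (hS v hv) (ε v) (hε v)
      exact ⟨w, hw, by rw [Metric.mem_ball, dist_comm]; exact hw'⟩
    have hop : IsOpen (P v) := hO.union Metric.isOpen_ball
    exact (hop.isConnected_iff_isPathConnected.mp hcon).joinedIn _ (Or.inl hz) _
      (Or.inr (Metric.mem_ball_self (hε v)))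
  have hPd : ∀ v a b (h : G.Adj a b), v ≠ a → v ≠ b → Disjoint (P v) (D.arcSet h) := by
    intro v a b h h1 h2
    refine Disjoint.union_left ?_ (hball v a b h h1 h2)
    rw [Set.disjoint_left]
    intro r hr hr'
    refine hr.1 (Or.inr ?_)
    simp only [mem_iUnion]
    exact ⟨a, b, h, hr'⟩
  let K : Option V → Option V → Set (ℝ × ℝ) := fun a b => match a, b with
    | none, none => ∅
    | none, some v => P v
    | some v, none => P v
    | some u, some v => {r | ∃ h : G.Adj u v, r ∈ D.arcSet h}
  refine noK5_of_drawing (apex G S) (fun a => a.elim z D.pos) K ?_ ?_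
  · rintro (_ | u) (_ | v) h
    · exact h.elim
    · exact hP v h
    · exact (hP u h).symm
    · have h' : G.Adj u v := h
      exact ⟨D.arc h', fun t => ⟨h', t, rfl⟩⟩
  · have aux : ∀ v a b, v ≠ a → v ≠ b →
        Disjoint (P v) {r | ∃ h : G.Adj a b, r ∈ D.arcSet h} := by
      intro v a b h1 h2
      rw [Set.disjoint_left]
      rintro r hr ⟨h, hr'⟩
      exact (hPd v a b h h1 h2).le_bot ⟨hr, hr'⟩
    have sn : ∀ {a b : V}, (some a ≠ some b) → a ≠ b := fun h h' => h (h' ▸ rfl)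
    rintro (_ | u) (_ | v) (_ | u') (_ | v') h h' h1 h2 h3 h4
    all_goals first
      | exact h.elim
      | exact h'.elim
      | exact absurd rfl h1
      | exact absurd rfl h2
      | exact absurd rfl h3
      | exact absurd rfl h4
      | exact aux v u' v' (sn h3) (sn h4)
      | exact aux u u' v' (sn h1) (sn h2)
      | exact (aux v' u v (sn h2.symm) (sn h4.symm)).symm
      | exact (aux u' u v (sn h1.symm) (sn h3.symm)).symm
      | skip
    rw [Set.disjoint_left]
    rintro r ⟨k, hr⟩ ⟨k', hr'⟩
    exact (arcs_disjoint D hplane k k' (sn h1) (sn h2) (sn h3) (sn h4)).le_bot ⟨hr, hr'⟩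

end Thomassen

/-- **Thomassen's theorem.** Let `G` be a plane graph whose outer face is bounded by a
cycle `F`, let `xy` be an edge of `F`, and let `L` be a list assignment such that
`|L(v)| ≥ 5` for every vertex not on `F`, `|L(v)| ≥ 3` for every vertex of `F` other
than `x` and `y`, `|L(x)| = |L(y)| = 1` and `L(x) ≠ L(y)`.  Then `G` is `L`-colorable. -/
theorem planar_choosable_precolored_edge
    {V : Type} [Fintype V] (G : SimpleGraph V) (D : Drawing G) (hplane : D.IsPlane)
    {r : V} (F : G.Walk r r) (hFcyc : F.IsCycle) (hFbd : D.BoundsOuter F)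
    (x y : V) (hxy : G.Adj x y) (hxyF : s(x, y) ∈ F.edges)
    (L : V → Finset ℕ)
    (hL5 : ∀ v : V, v ∉ F.support → 5 ≤ (L v).card)
    (hL3 : ∀ v ∈ F.support, v ≠ x → v ≠ y → 3 ≤ (L v).card)
    (hLx : (L x).card = 1) (hLy : (L y).card = 1) (hLxy : L x ≠ L y) :
    ListColorable G L := by
  classical
  have hsupp : ∀ v ∈ F.support, D.pos v ∈ closure D.outerFace := by
    intro v hv
    apply frontier_subset_closure
    rw [hFbd]
    exact Or.inl ⟨v, hv, rfl⟩
  have hne : D.outerFace.Nonempty :=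
    closure_nonempty_iff.mp ⟨_, hsupp r F.start_mem_support⟩
  have hK5 := Thomassen.apex_noK5 D hplane {v | v ∈ F.support} hsupp hne
  obtain ⟨cx, hcx⟩ := Finset.card_eq_one.mp hLx
  obtain ⟨cy, hcy⟩ := Finset.card_eq_one.mp hLy
  have hxs : x ∈ F.support := F.fst_mem_support_of_mem_edges hxyF
  have hys : y ∈ F.support := F.snd_mem_support_of_mem_edges hxyF
  have hN : ∀ v ∈ F.support,
      Thomassen.Nb (Thomassen.apex G {v | v ∈ F.support}) {none} (some v) := fun v hv =>
    ⟨none, rfl, hv⟩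
  obtain ⟨c, hc, hc'⟩ := (Thomassen.main_comb hK5 _ (Finset.univ.map Function.Embedding.some)
    rfl).2.2 {none} (fun a => a.elim ∅ L) (some x) (some y) cx cy
    ⟨⟨none, rfl⟩, by rintro a rfl b rfl; exact Relation.ReflTransGen.refl, by rintro a rfl; simp⟩
    (by simp) (by simp) hxy (hN x hxs) (hN y hys) hcx hcy
    (by rintro rfl; exact hLxy (hcx.trans hcy.symm))
    (by
      rintro (_ | v) hv hvx hvy
      · simp at hv
      · by_cases hvF : v ∈ F.support
        · exact Or.inr ⟨hN v hvF, hL3 v hvF (fun h => hvx (h ▸ rfl)) (fun h => hvy (h ▸ rfl))⟩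
        · exact Or.inl (hL5 v hvF))
  refine ⟨fun v => c (some v), fun v => ?_, fun u v huv => ?_⟩
  · exact hc (some v) (by simp)
  · exact hc' (some u) (by simp) (some v) (by simp) huv
end
end

section
/- Every planar graph is 5-choosable. -/
open Set

noncomputable section

section Winding

lemma exists_unique_clog {E : Type} [NormedAddCommGroup E] [NormedSpace ℝ E]
    (g : E → ℂ) (hg : Continuous g) (h0 : ∀ x, g x ≠ 0) (x₀ : E) (z₀ : ℂ)
    (hz : Complex.exp z₀ = g x₀) :
    ∃! F : C(E, ℂ), F x₀ = z₀ ∧ Complex.exp ∘ F = g :=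
  Complex.isCoveringMapOn_exp.existsUnique_continuousMap_lifts
    (f := ⟨g, hg⟩) (a₀ := x₀) (e₀ := z₀) hz (by intro x; simpa using h0 x)

lemma exists_clog {E : Type} [NormedAddCommGroup E] [NormedSpace ℝ E]
    (g : E → ℂ) (hg : Continuous g) (h0 : ∀ x, g x ≠ 0) :
    ∃ F : E → ℂ, Continuous F ∧ ∀ x, Complex.exp (F x) = g x := by
  obtain ⟨F, ⟨-, hF⟩, -⟩ := exists_unique_clog g hg h0 0 (Complex.log (g 0))
    (Complex.exp_log (h0 0))
  exact ⟨F, F.continuous, fun x => congrFun hF x⟩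

lemma clog_unique (g : ℝ → ℂ) (hg : Continuous g) (h0 : ∀ x, g x ≠ 0)
    (F F' : ℝ → ℂ) (hF : Continuous F) (hF' : Continuous F')
    (h : ∀ x, Complex.exp (F x) = g x) (h' : ∀ x, Complex.exp (F' x) = g x) :
    F 1 - F 0 = F' 1 - F' 0 := by
  have hu := exists_unique_clog g hg h0 0 (F 0) (h 0)
  have e1 : (⟨F, hF⟩ : C(ℝ, ℂ)) =
      ⟨fun x => F' x + (F 0 - F' 0), hF'.add continuous_const⟩ := by
    refine hu.unique ⟨rfl, funext h⟩ ⟨by simp, funext fun x => ?_⟩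
    have : Complex.exp (F 0 - F' 0) = 1 := by
      rw [Complex.exp_sub, h, h', div_self (h0 0)]
    simp [Complex.exp_add, h', this]
  have e2 := congrArg (fun f : C(ℝ, ℂ) => f 1) e1
  simp at e2
  rw [e2]; ring

/-- A choice of logarithms of `p q - p k` whose values for `(k, q)` and `(q, k)` differ by `π i`. -/
def ell {n : ℕ} (p : Fin n → ℂ) (k q : Fin n) : ℂ :=
  if k < q then Complex.log (p q - p k) else Complex.log (p k - p q) + Real.pi * Complex.I

lemma exp_ell {n : ℕ} (p : Fin n → ℂ) (k q : Fin n) (h : p q ≠ p k) :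
    Complex.exp (ell p k q) = p q - p k := by
  unfold ell
  split_ifs
  · exact Complex.exp_log (sub_ne_zero.2 h)
  · rw [Complex.exp_add, Complex.exp_log (sub_ne_zero.2 h.symm), Complex.exp_pi_mul_I]; ring

/-- Order sign. -/
def dd {n : ℕ} (k q : Fin n) : ℤ := if k < q then -1 else 1

lemma ell_sub {n : ℕ} (p : Fin n → ℂ) (k q : Fin n) (h : k ≠ q) :
    ell p k q - ell p q k = (dd k q : ℂ) * (Real.pi * Complex.I) := by
  unfold ell dd
  rcases lt_or_gt_of_ne h with h1 | h1
  · simp [h1, h1.not_gt]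
  · simp [h1, h1.not_gt]

lemma winding_exists {n : ℕ} (p : Fin n → ℂ) (e : Fin n → Fin n → ℝ → ℂ)
    (hc : ∀ i j, Continuous (e i j)) (h0 : ∀ i j, e i j 0 = p i) (h1 : ∀ i j, e i j 1 = p j)
    (k i j : Fin n) :
    ∃ N : ℤ, (∀ t, e i j t ≠ p k) → ∀ F : ℝ → ℂ, Continuous F →
      (∀ t, Complex.exp (F t) = e i j t - p k) →
      F 1 - F 0 = ell p k j - ell p k i + N * (2 * Real.pi * Complex.I) := by
  by_cases hne : ∀ t, e i j t ≠ p k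
  · have hcont : Continuous (fun t => e i j t - p k) := (hc i j).sub continuous_const
    obtain ⟨F, hF, hFe⟩ := exists_clog (fun t => e i j t - p k) hcont
      (fun t => sub_ne_zero.2 (hne t))
    have ei : Complex.exp (ell p k i) = p i - p k := exp_ell _ _ _ (by rw [← h0 i j]; exact hne 0)
    have ej : Complex.exp (ell p k j) = p j - p k := exp_ell _ _ _ (by rw [← h1 i j]; exact hne 1)
    have a0 : Complex.exp (F 0) = Complex.exp (ell p k i) := by rw [hFe, ei, h0]
    have a1 : Complex.exp (F 1) = Complex.exp (ell p k j) := by rw [hFe, ej, h1]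
    obtain ⟨m0, hm0⟩ := Complex.exp_eq_exp_iff_exists_int.1 a0
    obtain ⟨m1, hm1⟩ := Complex.exp_eq_exp_iff_exists_int.1 a1
    refine ⟨m1 - m0, fun _ F' hF' hFe' => ?_⟩
    rw [clog_unique _ hcont (fun t => sub_ne_zero.2 (hne t)) F' F hF' hF hFe' hFe, hm0, hm1]
    push_cast; ring
  · exact ⟨0, fun h => absurd h hne⟩

lemma winding {n : ℕ} (p : Fin n → ℂ) (e : Fin n → Fin n → ℝ → ℂ)
    (hc : ∀ i j, Continuous (e i j)) (h0 : ∀ i j, e i j 0 = p i) (h1 : ∀ i j, e i j 1 = p j) :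
    ∃ N : Fin n → Fin n → Fin n → ℤ, ∀ i j u v, (∀ s t, e i j s ≠ e u v t) →
      dd i v + dd v j + dd u i + dd j u
        + 2 * (N i u v + N v i j - N u i j - N j u v) = 0 := by
  choose N hN using winding_exists p e hc h0 h1
  refine ⟨N, fun i j u v hd => ?_⟩
  obtain ⟨H, hH, hHe⟩ := exists_clog (fun x : ℝ × ℝ => e u v x.2 - e i j x.1)
    (((hc u v).comp continuous_snd).sub ((hc i j).comp continuous_fst))
    (fun x => sub_ne_zero.2 (hd x.1 x.2).symm)
  have b1 := hN i u v (fun t => by rw [← h0 i j]; exact (hd 0 t).symm) (fun t => H (0, t))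
    (by fun_prop) (fun t => by rw [hHe]; simp [h0])
  have b2 := hN j u v (fun t => by rw [← h1 i j]; exact (hd 1 t).symm) (fun t => H (1, t))
    (by fun_prop) (fun t => by rw [hHe]; simp [h1])
  have b3 := hN u i j (fun t => by rw [← h0 u v]; exact (hd t 0))
    (fun t => H (t, 0) + Real.pi * Complex.I)
    (by fun_prop) (fun t => by rw [Complex.exp_add, hHe, Complex.exp_pi_mul_I]; simp [h0])
  have b4 := hN v i j (fun t => by rw [← h1 u v]; exact (hd t 1))
    (fun t => H (t, 1) + Real.pi * Complex.I)
    (by fun_prop) (fun t => by rw [Complex.exp_add, hHe, Complex.exp_pi_mul_I]; simp [h1])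
  have n1 : i ≠ v := by rintro rfl; exact hd 0 1 (by rw [h0, h1])
  have n2 : v ≠ j := by rintro rfl; exact hd 1 1 (by rw [h1, h1])
  have n3 : u ≠ i := by rintro rfl; exact hd 0 0 (by rw [h0, h0])
  have n4 : j ≠ u := by rintro rfl; exact hd 1 0 (by rw [h1, h0])
  have l1 := ell_sub p _ _ n1
  have l2 := ell_sub p _ _ n2
  have l3 := ell_sub p _ _ n3
  have l4 := ell_sub p _ _ n4
  have key : ((dd i v + dd v j + dd u i + dd j u
        + 2 * (N i u v + N v i j - N u i j - N j u v) : ℤ) : ℂ) * (Real.pi * Complex.I) = 0 := by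
    push_cast
    linear_combination b2 - b1 + b3 - b4 - l1 - l2 - l3 - l4
  have hpi : (Real.pi * Complex.I : ℂ) ≠ 0 :=
    mul_ne_zero (by exact_mod_cast Real.pi_ne_zero) Complex.I_ne_zero
  exact_mod_cast (mul_eq_zero.1 key).resolve_right hpi

lemma no_K5_drawing (p : Fin 5 → ℂ) (e : Fin 5 → Fin 5 → ℝ → ℂ)
    (hc : ∀ i j, Continuous (e i j)) (h0 : ∀ i j, e i j 0 = p i) (h1 : ∀ i j, e i j 1 = p j)
    (hd : ∀ i j u v, i ≠ j → u ≠ v → i ≠ u → i ≠ v → j ≠ u → j ≠ v →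
      ∀ s t, e i j s ≠ e u v t) : False := by
  obtain ⟨N, hN⟩ := winding p e hc h0 h1
  have H : ∀ i j u v : Fin 5, (i ≠ j ∧ u ≠ v ∧ i ≠ u ∧ i ≠ v ∧ j ≠ u ∧ j ≠ v) →
      dd i v + dd v j + dd u i + dd j u
        + 2 * (N i u v + N v i j - N u i j - N j u v) = 0 := fun i j u v ⟨a, b, c, d, f, g⟩ =>
    hN i j u v (hd i j u v a b c d f g)
  have a1 := H 0 1 2 3 (by decide)
  have a2 := H 0 2 1 3 (by decide)
  have a3 := H 0 3 1 2 (by decide)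
  have a4 := H 0 1 2 4 (by decide)
  have a5 := H 0 2 1 4 (by decide)
  have a6 := H 0 4 1 2 (by decide)
  have a7 := H 0 1 3 4 (by decide)
  have a8 := H 0 3 1 4 (by decide)
  have a9 := H 0 4 1 3 (by decide)
  have a10 := H 0 2 3 4 (by decide)
  have a11 := H 0 3 2 4 (by decide)
  have a12 := H 0 4 2 3 (by decide)
  have a13 := H 1 2 3 4 (by decide)
  have a14 := H 1 3 2 4 (by decide)
  have a15 := H 1 4 2 3 (by decide)
  clear H hN hd h0 h1 hc
  simp [dd] at *
  omega

lemma no_K33_drawing (p : Fin 6 → ℂ) (e : Fin 6 → Fin 6 → ℝ → ℂ)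
    (hc : ∀ i j, Continuous (e i j)) (h0 : ∀ i j, e i j 0 = p i) (h1 : ∀ i j, e i j 1 = p j)
    (hd : ∀ i j u v : Fin 6, i.1 % 2 = 0 → j.1 % 2 = 1 → u.1 % 2 = 0 → v.1 % 2 = 1 →
      i ≠ u → j ≠ v → ∀ s t, e i j s ≠ e u v t) : False := by
  obtain ⟨N, hN⟩ := winding p e hc h0 h1
  have H : ∀ i j u v : Fin 6, (i.1 % 2 = 0 ∧ j.1 % 2 = 1 ∧ u.1 % 2 = 0 ∧ v.1 % 2 = 1 ∧
      i ≠ u ∧ j ≠ v) →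
      dd i v + dd v j + dd u i + dd j u
        + 2 * (N i u v + N v i j - N u i j - N j u v) = 0 := fun i j u v ⟨a, b, c, d, f, g⟩ =>
    hN i j u v (hd i j u v a b c d f g)
  have a1 := H 0 1 2 3 (by decide)
  have a2 := H 0 1 2 5 (by decide)
  have a3 := H 0 3 2 1 (by decide)
  have a4 := H 0 3 2 5 (by decide)
  have a5 := H 0 5 2 1 (by decide)
  have a6 := H 0 5 2 3 (by decide)
  have b1 := H 0 1 4 3 (by decide)
  have b2 := H 0 1 4 5 (by decide)
  have b3 := H 0 3 4 1 (by decide)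
  have b4 := H 0 3 4 5 (by decide)
  have b5 := H 0 5 4 1 (by decide)
  have b6 := H 0 5 4 3 (by decide)
  have c1 := H 2 1 4 3 (by decide)
  have c2 := H 2 1 4 5 (by decide)
  have c3 := H 2 3 4 1 (by decide)
  have c4 := H 2 3 4 5 (by decide)
  have c5 := H 2 5 4 1 (by decide)
  have c6 := H 2 5 4 3 (by decide)
  clear H hN hd h0 h1 hc
  simp [dd] at *
  omega

end Winding
section Models

variable {V : Type}

/-- Reachability inside a vertex set. -/
def RT (G : SimpleGraph V) (B : Set V) (u v : V) : Prop :=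
  Relation.ReflTransGen (fun a b => G.Adj a b ∧ a ∈ B ∧ b ∈ B) u v

/-- A vertex set that induces a (pre)connected subgraph. -/
def Conn (G : SimpleGraph V) (B : Set V) : Prop := ∀ u ∈ B, ∀ v ∈ B, RT G B u v

/-- A model of the graph with adjacency `r` on `Fin n` as a minor of `G`. -/
def Model (G : SimpleGraph V) {n : ℕ} (r : Fin n → Fin n → Prop) (B : Fin n → Set V) : Prop :=
  (∀ i, (B i).Nonempty) ∧ (∀ i, Conn G (B i)) ∧ (∀ i j, i ≠ j → Disjoint (B i) (B j)) ∧
    ∀ i j, r i j → ∃ a ∈ B i, ∃ b ∈ B j, G.Adj a b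

lemma RT.mono {G : SimpleGraph V} {B C : Set V} (h : B ⊆ C) {u v : V} (r : RT G B u v) :
    RT G C u v :=
  Relation.ReflTransGen.mono (fun _ _ x => ⟨x.1, h x.2.1, h x.2.2⟩) _ _ r

lemma RT.symm {G : SimpleGraph V} {B : Set V} {u v : V} (r : RT G B u v) : RT G B v u := by
  induction r with
  | refl => exact Relation.ReflTransGen.refl
  | tail _ h ih => exact Relation.ReflTransGen.head ⟨h.1.symm, h.2.2, h.2.1⟩ ih

/-- Points of the plane used by the subgraph induced on `B`. -/
def ptsOf {G : SimpleGraph V} (D : Drawing G) (B : Set V) : Set (ℝ × ℝ) :=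
  {z | (∃ v ∈ B, z = D.pos v) ∨
    ∃ u v : V, ∃ h : G.Adj u v, u ∈ B ∧ v ∈ B ∧ ∃ t, D.arc h t = z}

lemma pos_notin_ptsOf {G : SimpleGraph V} (D : Drawing G) {B : Set V} {w : V} (hw : w ∉ B) :
    D.pos w ∉ ptsOf D B := by
  rintro (⟨v, hv, h⟩ | ⟨u, v, h, hu, hv, t, ht⟩)
  · exact hw (D.pos_inj h ▸ hv)
  · rcases D.arc_vertex h t w ht with rfl | rfl
    · rw [Path.source] at ht; exact hw (D.pos_inj ht ▸ hu)
    · rw [Path.target] at ht; exact hw (D.pos_inj ht ▸ hv)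

lemma ptsOf_disjoint {G : SimpleGraph V} (D : Drawing G) (hD : D.IsPlane) {B C : Set V}
    (hBC : Disjoint B C) {z : ℝ × ℝ} (hB : z ∈ ptsOf D B) (hC : z ∈ ptsOf D C) : False := by
  have hB' := hB
  have hC' := hC
  rcases hB with (⟨v, hv, rfl⟩ | ⟨u, v, h, hu, hv, t, rfl⟩)
  · exact pos_notin_ptsOf D (Set.disjoint_left.1 hBC hv) hC
  rcases hC with (⟨v', hv', h'⟩ | ⟨u', v', h', hu', hv', t', ht'⟩)
  · rw [h'] at hB'
    exact pos_notin_ptsOf D (Set.disjoint_right.1 hBC hv') hB'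
  by_cases t0 : t = 0
  · subst t0
    rw [Path.source] at hC'
    exact pos_notin_ptsOf D (Set.disjoint_left.1 hBC hu) hC'
  by_cases t1 : t = 1
  · subst t1
    rw [Path.target] at hC'
    exact pos_notin_ptsOf D (Set.disjoint_left.1 hBC hv) hC'
  rw [← ht'] at hB'
  by_cases t0' : t' = 0
  · subst t0'
    rw [Path.source] at hB'
    exact pos_notin_ptsOf D (Set.disjoint_right.1 hBC hu') hB'
  by_cases t1' : t' = 1
  · subst t1'
    rw [Path.target] at hB'
    exact pos_notin_ptsOf D (Set.disjoint_right.1 hBC hv') hB'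
  refine hD (D.arc h t) ⟨u, v, u', v', h, h', ?_, ⟨t, ⟨t0, t1⟩, rfl⟩, ⟨t', ⟨t0', t1'⟩, ht'⟩⟩
  intro hs
  have hm : u ∈ s(u', v') := by rw [← hs]; simp
  rcases Sym2.mem_iff.1 hm with rfl | rfl
  · exact Set.disjoint_left.1 hBC hu hu'
  · exact Set.disjoint_left.1 hBC hu hv'

lemma joined_of_RT {G : SimpleGraph V} (D : Drawing G) {B : Set V} {u v : V} (hu : u ∈ B)
    (r : RT G B u v) : JoinedIn (ptsOf D B) (D.pos u) (D.pos v) := by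
  induction r with
  | refl => exact JoinedIn.refl (Or.inl ⟨u, hu, rfl⟩)
  | tail _ h ih =>
    exact ih.trans ⟨D.arc h.1, fun t => Or.inr ⟨_, _, h.1, h.2.1, h.2.2, t, rfl⟩⟩

lemma model_paths {G : SimpleGraph V} (D : Drawing G) (hD : D.IsPlane) {n : ℕ}
    {r : Fin n → Fin n → Prop} {B : Fin n → Set V} (hB : Model G r B) :
    ∃ (p : Fin n → ℂ) (e : Fin n → Fin n → ℝ → ℂ),
      (∀ i j, Continuous (e i j)) ∧ (∀ i j, e i j 0 = p i) ∧ (∀ i j, e i j 1 = p j) ∧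
      ∀ i j u v, r i j → r u v → i ≠ u → i ≠ v → j ≠ u → j ≠ v →
        ∀ s t, e i j s ≠ e u v t := by
  obtain ⟨hne, hconn, hdis, hadj⟩ := hB
  choose c hc using hne
  have hp : ∀ i j, ∃ γ : Path (D.pos (c i)) (D.pos (c j)), r i j →
      ∀ t, γ t ∈ ptsOf D (B i ∪ B j) := by
    intro i j
    by_cases hr : r i j
    · obtain ⟨a, ha, b, hb, hab⟩ := hadj i j hr
      have h1 : RT G (B i ∪ B j) (c i) a := (hconn i _ (hc i) _ ha).mono Set.subset_union_left
      have h2 : RT G (B i ∪ B j) b (c j) := (hconn j _ hb _ (hc j)).mono Set.subset_union_right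
      have h3 : RT G (B i ∪ B j) (c i) (c j) :=
        (Relation.ReflTransGen.tail h1 ⟨hab, Or.inl ha, Or.inr hb⟩).trans h2
      obtain ⟨γ, hγ⟩ := joined_of_RT D (Or.inl (hc i)) h3
      exact ⟨γ, fun _ => hγ⟩
    · exact ⟨PathConnectedSpace.somePath _ _, fun h => absurd h hr⟩
  choose γ hγ using hp
  refine ⟨fun i => Complex.equivRealProdCLM.symm (D.pos (c i)),
    fun i j t => Complex.equivRealProdCLM.symm ((γ i j).extend t), ?_, ?_, ?_, ?_⟩
  · intro i j
    exact Complex.equivRealProdCLM.symm.continuous.comp (γ i j).continuous_extend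
  · intro i j; simp
  · intro i j; simp
  · intro i j u v h1 h2 a b c' d s t hst
    have hst' := Complex.equivRealProdCLM.symm.injective hst
    refine ptsOf_disjoint D hD (B := B i ∪ B j) (C := B u ∪ B v) (z := (γ i j).extend s) ?_
      (hγ i j h1 _) ?_
    · simp only [Set.disjoint_union_left, Set.disjoint_union_right]
      exact ⟨⟨hdis _ _ a, hdis _ _ c'⟩, hdis _ _ b, hdis _ _ d⟩
    · rw [hst']; exact hγ u v h2 _

lemma no_K5_model {G : SimpleGraph V} (D : Drawing G) (hD : D.IsPlane) (B : Fin 5 → Set V) :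
    ¬ Model G (fun i j => i ≠ j) B := by
  intro hB
  obtain ⟨p, e, hc, h0, h1, hd⟩ := model_paths D hD hB
  exact no_K5_drawing p e hc h0 h1 hd

lemma no_K33_model {G : SimpleGraph V} (D : Drawing G) (hD : D.IsPlane) (B : Fin 6 → Set V) :
    ¬ Model G (fun i j => i.1 % 2 = 0 ∧ j.1 % 2 = 1) B := by
  intro hB
  obtain ⟨p, e, hc, h0, h1, hd⟩ := model_paths D hD hB
  refine no_K33_drawing p e hc h0 h1 (fun i j u v a b c d f g => hd i j u v ⟨a, b⟩ ⟨c, d⟩ f ?_ ?_ g)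
  · rintro rfl; omega
  · rintro rfl; omega

end Models
section Combinatorics

variable {V : Type}

/-- Two vertex sets joined by an edge. -/
def Touch (G : SimpleGraph V) (B C : Set V) : Prop := ∃ a ∈ B, ∃ b ∈ C, G.Adj a b

lemma Touch.symm {G : SimpleGraph V} {B C : Set V} (h : Touch G B C) : Touch G C B := by
  obtain ⟨a, ha, b, hb, hab⟩ := h
  exact ⟨b, hb, a, ha, hab.symm⟩

lemma RT.trans {G : SimpleGraph V} {B : Set V} {u v w : V} (r : RT G B u v) (s : RT G B v w) :
    RT G B u w := Relation.ReflTransGen.trans r s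

lemma RT.mem {G : SimpleGraph V} {B : Set V} {u v : V} (hu : u ∈ B) (r : RT G B u v) : v ∈ B := by
  induction r with
  | refl => exact hu
  | tail _ h _ => exact h.2.2

lemma conn_of_root {G : SimpleGraph V} {B : Set V} (a : V) (h : ∀ x ∈ B, RT G B a x) :
    Conn G B := fun u hu v hv => (h u hu).symm.trans (h v hv)

lemma conn_singleton (G : SimpleGraph V) (a : V) : Conn G {a} :=
  conn_of_root a (by rintro x rfl; exact Relation.ReflTransGen.refl)

lemma conn_comp (G : SimpleGraph V) (B : Set V) (a : V) : Conn G {x | RT G B a x} := by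
  refine conn_of_root a (fun x hx => ?_)
  have hx : RT G B a x := hx
  induction hx with
  | refl => exact Relation.ReflTransGen.refl
  | tail h1 h2 ih =>
    exact Relation.ReflTransGen.tail (ih h1) ⟨h2.1, h1, Relation.ReflTransGen.tail h1 h2⟩

lemma RT.exit {G : SimpleGraph V} {B T : Set V} {u v : V} (r : RT G B u v) (hu : u ∈ T)
    (hv : v ∉ T) : ∃ x ∈ T, ∃ y, y ∉ T ∧ y ∈ B ∧ G.Adj x y := by
  induction r with
  | refl => exact absurd hu hv
  | @tail b c h1 h2 ih =>
    by_cases hb : b ∈ T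
    · exact ⟨b, hb, c, hv, h2.2.2, h2.1⟩
    · exact ih hb

lemma conn_insert {G : SimpleGraph V} {A : Set V} (hA : Conn G A) {x : V}
    (hx : ∃ a ∈ A, G.Adj a x) : Conn G (insert x A) := by
  obtain ⟨a, ha, hax⟩ := hx
  refine conn_of_root a ?_
  rintro y (rfl | hy)
  · exact Relation.ReflTransGen.single ⟨hax, Or.inr ha, Or.inl rfl⟩
  · exact (hA a ha y hy).mono (Set.subset_insert _ _)

lemma exists_path_fun {G : SimpleGraph V} {B : Set V} {u v : V} (hu : u ∈ B) (r : RT G B u v) :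
    ∃ (n : ℕ) (f : ℕ → V), f 0 = u ∧ f n = v ∧ (∀ i ≤ n, f i ∈ B) ∧
      (∀ i < n, G.Adj (f i) (f (i + 1))) ∧ (∀ i ≤ n, ∀ j ≤ n, f i = f j → i = j) := by
  classical
  have hw : ∃ w : G.Walk u v, ∀ x ∈ w.support, x ∈ B := by
    induction r with
    | refl => exact ⟨.nil, by simpa using hu⟩
    | tail _ h ih =>
      obtain ⟨w, hw⟩ := ih
      refine ⟨w.concat h.1, fun x hx => ?_⟩
      rw [SimpleGraph.Walk.support_concat] at hx
      simp only [List.mem_append, List.mem_singleton] at hx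
      rcases hx with hx | rfl
      · exact hw x hx
      · exact h.2.2
  obtain ⟨w, hw⟩ := hw
  have hp := w.bypass_isPath
  refine ⟨w.bypass.length, w.bypass.getVert, by simp, by simp, fun i _ =>
    hw _ (w.support_bypass_subset_support (w.bypass.getVert_mem_support i)),
    fun i hi => w.bypass.adj_getVert_succ hi, fun i hi j hj h => hp.getVert_injOn hi hj h⟩

lemma conn_segment {G : SimpleGraph V} {f : ℕ → V} {n : ℕ}
    (hf : ∀ i < n, G.Adj (f i) (f (i + 1))) {a b : ℕ} (hb : b ≤ n) :
    Conn G (f '' Set.Icc a b) := by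
  refine conn_of_root (f a) ?_
  rintro _ ⟨x, ⟨hx1, hx2⟩, rfl⟩
  induction x, hx1 using Nat.le_induction with
  | base => exact Relation.ReflTransGen.refl
  | succ x hx ih =>
    exact Relation.ReflTransGen.tail (ih (by omega))
      ⟨hf x (by omega), ⟨x, ⟨hx, by omega⟩, rfl⟩, ⟨x + 1, ⟨by omega, hx2⟩, rfl⟩⟩

lemma rooted {G : SimpleGraph V} {J : Set V} {a₁ a₂ a₃ : V} (h1 : a₁ ∈ J) (h2 : a₂ ∈ J)
    (h3 : a₃ ∈ J) (h12 : a₁ ≠ a₂) (h13 : a₁ ≠ a₃) (h23 : a₂ ≠ a₃)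
    (c1 : Conn G (J \ {a₁})) (c2 : Conn G (J \ {a₂})) (c3 : Conn G (J \ {a₃})) :
    ∃ T₁ T₂ T₃ : Set V, a₁ ∈ T₁ ∧ a₂ ∈ T₂ ∧ a₃ ∈ T₃ ∧ T₁ ⊆ J ∧ T₂ ⊆ J ∧ T₃ ⊆ J ∧
      Disjoint T₁ T₂ ∧ Disjoint T₁ T₃ ∧ Disjoint T₂ T₃ ∧ Conn G T₁ ∧ Conn G T₂ ∧ Conn G T₃ ∧
      ((Touch G T₁ T₂ ∧ Touch G T₁ T₃ ∧ Touch G T₂ T₃) ∨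
        ∃ p ∈ J, p ∉ T₁ ∧ p ∉ T₂ ∧ p ∉ T₃ ∧
          Touch G {p} T₁ ∧ Touch G {p} T₂ ∧ Touch G {p} T₃) := by
  obtain ⟨n, f, f0, fn, fB, fadj, finj⟩ := exists_path_fun (B := J \ {a₃}) ⟨h1, h13⟩
    (c3 a₁ ⟨h1, h13⟩ a₂ ⟨h2, h23⟩)
  set P : Set V := f '' Set.Icc 0 n with hP
  have ha1P : a₁ ∈ P := ⟨0, ⟨le_rfl, by omega⟩, f0⟩
  have ha2P : a₂ ∈ P := ⟨n, ⟨by omega, le_rfl⟩, fn⟩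
  have ha3P : a₃ ∉ P := by
    rintro ⟨i, hi, rfl⟩
    exact (fB i hi.2).2 rfl
  set T₃ : Set V := {x | RT G (J \ P) a₃ x} with hT3
  have hT3J : ∀ x ∈ T₃, x ∈ J \ P := fun x hx => RT.mem ⟨h3, ha3P⟩ hx
  have a3T : a₃ ∈ T₃ := Relation.ReflTransGen.refl
  have hcT3 : Conn G T₃ := conn_comp _ _ _
  have key : ∀ a b : V, b ∈ P → RT G (J \ {a}) a₃ b →
      ∃ i ≤ n, f i ≠ a ∧ ∃ x ∈ T₃, G.Adj x (f i) := by
    intro a b hb hr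
    obtain ⟨x, hx, y, hy, hyB, hxy⟩ := hr.exit a3T (fun h => (hT3J b h).2 hb)
    have hyP : y ∈ P := by
      by_contra hyP
      exact hy (Relation.ReflTransGen.tail (show RT G (J \ P) a₃ x from hx)
        ⟨hxy, hT3J x hx, hyB.1, hyP⟩)
    obtain ⟨i, hi, rfl⟩ := hyP
    exact ⟨i, hi.2, hyB.2, x, hx, hxy⟩
  obtain ⟨i, hi, hia, x, hx, hxi⟩ := key a₁ a₂ ha2P (c1 _ ⟨h3, h13.symm⟩ _ ⟨h2, h12.symm⟩)
  obtain ⟨j, hj, hja, y, hy, hyj⟩ := key a₂ a₁ ha1P (c2 _ ⟨h3, h23.symm⟩ _ ⟨h1, h12⟩)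
  have hi0 : i ≠ 0 := by rintro rfl; exact hia f0
  have hjn : j ≠ n := by rintro rfl; exact hja fn
  have segJ : ∀ a b, b ≤ n → f '' Set.Icc a b ⊆ J := by
    rintro a b hb _ ⟨k, hk, rfl⟩
    exact (fB k (hk.2.trans hb)).1
  have segD : ∀ a b, b ≤ n → Disjoint (f '' Set.Icc a b) T₃ := by
    intro a b hb
    rw [Set.disjoint_left]
    rintro _ ⟨k, hk, rfl⟩ hk'
    exact (hT3J _ hk').2 ⟨k, ⟨by omega, hk.2.trans hb⟩, rfl⟩
  have segDD : ∀ a b c d, b < c → d ≤ n → Disjoint (f '' Set.Icc a b) (f '' Set.Icc c d) := by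
    intro a b c d hbc hd
    rw [Set.disjoint_left]
    rintro _ ⟨k, hk, rfl⟩ ⟨l, hl, hkl⟩
    by_cases hh : k ≤ n
    · have := finj l (hl.2.trans hd) k hh hkl
      have := hk.2; have := hl.1; omega
    · have := hk.2; have := hl.1; have := hl.2; omega
  have T3J : T₃ ⊆ J := fun x hx => (hT3J x hx).1
  by_cases hij : i = j
  · subst hij
    refine ⟨f '' Set.Icc 0 (i - 1), f '' Set.Icc (i + 1) n, T₃, ⟨0, ⟨by omega, by omega⟩, f0⟩,
      ⟨n, ⟨by omega, le_rfl⟩, fn⟩, a3T, segJ _ _ (by omega), segJ _ _ le_rfl, T3J,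
      segDD _ _ _ _ (by omega) le_rfl, segD _ _ (by omega), segD _ _ le_rfl,
      conn_segment fadj (by omega), conn_segment fadj le_rfl, hcT3, Or.inr ?_⟩
    refine ⟨f i, (fB i hi).1, ?_, ?_, ?_, ?_, ?_, ?_⟩
    · rintro ⟨k, hk, hki⟩
      have := finj k (by have := hk.2; omega) i hi hki
      have := hk.2; omega
    · rintro ⟨k, hk, hki⟩
      have := finj k hk.2 i hi hki
      have := hk.1; omega
    · exact fun h => (hT3J _ h).2 ⟨i, ⟨by omega, hi⟩, rfl⟩
    · refine ⟨f i, rfl, f (i - 1), ⟨i - 1, ⟨by omega, le_rfl⟩, rfl⟩, ?_⟩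
      have := fadj (i - 1) (by omega)
      rw [Nat.sub_add_cancel (by omega)] at this
      exact this.symm
    · exact ⟨f i, rfl, f (i + 1), ⟨i + 1, ⟨le_rfl, by omega⟩, rfl⟩, fadj i (by omega)⟩
    · exact ⟨f i, rfl, x, hx, hxi.symm⟩
  · have hm : ∃ l m, l < m ∧ m ≤ n ∧ (∃ x ∈ T₃, G.Adj x (f l)) ∧ (∃ x ∈ T₃, G.Adj x (f m)) := by
      rcases lt_or_gt_of_ne hij with h | h
      · exact ⟨i, j, h, hj, ⟨x, hx, hxi⟩, ⟨y, hy, hyj⟩⟩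
      · exact ⟨j, i, h, hi, ⟨y, hy, hyj⟩, ⟨x, hx, hxi⟩⟩
    obtain ⟨l, m, hlm, hmn, ⟨x, hx, hxl⟩, ⟨y, hy, hym⟩⟩ := hm
    refine ⟨f '' Set.Icc 0 (m - 1), f '' Set.Icc m n, T₃, ⟨0, ⟨by omega, by omega⟩, f0⟩,
      ⟨n, ⟨by omega, le_rfl⟩, fn⟩, a3T, segJ _ _ (by omega), segJ _ _ le_rfl, T3J,
      segDD _ _ _ _ (by omega) le_rfl, segD _ _ (by omega), segD _ _ le_rfl,
      conn_segment fadj (by omega), conn_segment fadj le_rfl, hcT3, Or.inl ⟨?_, ?_, ?_⟩⟩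
    · refine ⟨f (m - 1), ⟨m - 1, ⟨by omega, le_rfl⟩, rfl⟩, f m, ⟨m, ⟨le_rfl, hmn⟩, rfl⟩, ?_⟩
      have := fadj (m - 1) (by omega)
      rwa [Nat.sub_add_cancel (by omega)] at this
    · exact ⟨f l, ⟨l, ⟨by omega, by omega⟩, rfl⟩, x, hx, hxl.symm⟩
    · exact ⟨f m, ⟨m, ⟨le_rfl, hmn⟩, rfl⟩, y, hy, hym.symm⟩

lemma mk_K5 {G : SimpleGraph V} {B₀ B₁ B₂ B₃ B₄ : Set V}
    (n0 : B₀.Nonempty) (n1 : B₁.Nonempty) (n2 : B₂.Nonempty) (n3 : B₃.Nonempty) (n4 : B₄.Nonempty)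
    (c0 : Conn G B₀) (c1 : Conn G B₁) (c2 : Conn G B₂) (c3 : Conn G B₃) (c4 : Conn G B₄)
    (d01 : Disjoint B₀ B₁) (d02 : Disjoint B₀ B₂) (d03 : Disjoint B₀ B₃) (d04 : Disjoint B₀ B₄)
    (d12 : Disjoint B₁ B₂) (d13 : Disjoint B₁ B₃) (d14 : Disjoint B₁ B₄)
    (d23 : Disjoint B₂ B₃) (d24 : Disjoint B₂ B₄) (d34 : Disjoint B₃ B₄)
    (t01 : Touch G B₀ B₁) (t02 : Touch G B₀ B₂) (t03 : Touch G B₀ B₃) (t04 : Touch G B₀ B₄)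
    (t12 : Touch G B₁ B₂) (t13 : Touch G B₁ B₃) (t14 : Touch G B₁ B₄)
    (t23 : Touch G B₂ B₃) (t24 : Touch G B₂ B₄) (t34 : Touch G B₃ B₄) :
    Model G (fun i j : Fin 5 => i ≠ j) ![B₀, B₁, B₂, B₃, B₄] := by
  have hlt : ∀ (R : Set V → Set V → Prop), (∀ B C, R B C → R C B) →
      R B₀ B₁ → R B₀ B₂ → R B₀ B₃ → R B₀ B₄ → R B₁ B₂ → R B₁ B₃ → R B₁ B₄ → R B₂ B₃ → R B₂ B₄ →
      R B₃ B₄ → ∀ i j : Fin 5, i ≠ j → R (![B₀, B₁, B₂, B₃, B₄] i) (![B₀, B₁, B₂, B₃, B₄] j) := by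
    intro R hR r1 r2 r3 r4 r5 r6 r7 r8 r9 r10 i j hij
    fin_cases i <;> fin_cases j <;> first | exact absurd rfl hij | assumption |
      (apply hR; assumption)
  refine ⟨?_, ?_, hlt _ (fun _ _ h => h.symm) d01 d02 d03 d04 d12 d13 d14 d23 d24 d34,
    hlt (Touch G) (fun _ _ h => h.symm) t01 t02 t03 t04 t12 t13 t14 t23 t24 t34⟩
  · intro i; fin_cases i <;> assumption
  · intro i; fin_cases i <;> assumption

lemma mk_K33 {G : SimpleGraph V} {B₀ B₁ B₂ B₃ B₄ B₅ : Set V}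
    (n0 : B₀.Nonempty) (n1 : B₁.Nonempty) (n2 : B₂.Nonempty) (n3 : B₃.Nonempty) (n4 : B₄.Nonempty)
    (n5 : B₅.Nonempty)
    (c0 : Conn G B₀) (c1 : Conn G B₁) (c2 : Conn G B₂) (c3 : Conn G B₃) (c4 : Conn G B₄)
    (c5 : Conn G B₅)
    (d01 : Disjoint B₀ B₁) (d02 : Disjoint B₀ B₂) (d03 : Disjoint B₀ B₃) (d04 : Disjoint B₀ B₄)
    (d05 : Disjoint B₀ B₅)
    (d12 : Disjoint B₁ B₂) (d13 : Disjoint B₁ B₃) (d14 : Disjoint B₁ B₄) (d15 : Disjoint B₁ B₅)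
    (d23 : Disjoint B₂ B₃) (d24 : Disjoint B₂ B₄) (d25 : Disjoint B₂ B₅)
    (d34 : Disjoint B₃ B₄) (d35 : Disjoint B₃ B₅) (d45 : Disjoint B₄ B₅)
    (t01 : Touch G B₀ B₁) (t03 : Touch G B₀ B₃) (t05 : Touch G B₀ B₅)
    (t21 : Touch G B₂ B₁) (t23 : Touch G B₂ B₃) (t25 : Touch G B₂ B₅)
    (t41 : Touch G B₄ B₁) (t43 : Touch G B₄ B₃) (t45 : Touch G B₄ B₅) :
    Model G (fun i j : Fin 6 => i.1 % 2 = 0 ∧ j.1 % 2 = 1) ![B₀, B₁, B₂, B₃, B₄, B₅] := by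
  refine ⟨?_, ?_, ?_, ?_⟩
  · intro i; fin_cases i <;> assumption
  · intro i; fin_cases i <;> assumption
  · intro i j hij
    fin_cases i <;> fin_cases j <;> first | exact absurd rfl hij | assumption |
      (apply Disjoint.symm; assumption)
  · intro i j hij
    change Touch G _ _
    fin_cases i <;> fin_cases j <;> first | assumption | (exfalso; revert hij; decide)

/-- In the boundary set every vertex has few boundary neighbours. -/
lemma no_three {G : SimpleGraph V}
    (hK5 : ∀ B : Fin 5 → Set V, ¬ Model G (fun i j => i ≠ j) B)
    (hK33 : ∀ B : Fin 6 → Set V, ¬ Model G (fun i j => i.1 % 2 = 0 ∧ j.1 % 2 = 1) B)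
    {A X : Set V} (hA : Conn G A) (hAX : Disjoint A X)
    {s a₁ a₂ a₃ : V} (hs : s ∈ X) (h1 : a₁ ∈ X) (h2 : a₂ ∈ X) (h3 : a₃ ∈ X)
    (ns : ∃ a ∈ A, G.Adj a s) (n1 : ∃ a ∈ A, G.Adj a a₁) (n2 : ∃ a ∈ A, G.Adj a a₂)
    (n3 : ∃ a ∈ A, G.Adj a a₃) (s1 : G.Adj s a₁) (s2 : G.Adj s a₂) (s3 : G.Adj s a₃)
    (h12 : a₁ ≠ a₂) (h13 : a₁ ≠ a₃) (h23 : a₂ ≠ a₃)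
    (c1 : Conn G (X \ {s, a₁})) (c2 : Conn G (X \ {s, a₂})) (c3 : Conn G (X \ {s, a₃})) :
    False := by
  have e : ∀ a, X \ {s, a} = (X \ {s}) \ {a} := by
    intro a; ext z; simp [and_assoc]
  rw [e] at c1 c2 c3
  obtain ⟨T₁, T₂, T₃, m1, m2, m3, j1, j2, j3, d12, d13, d23, k1, k2, k3, h⟩ :=
    rooted (J := X \ {s}) ⟨h1, s1.ne'⟩ ⟨h2, s2.ne'⟩ ⟨h3, s3.ne'⟩ h12 h13 h23 c1 c2 c3
  have hAT : ∀ T : Set V, T ⊆ X \ {s} → Disjoint A T := fun T hT =>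
    hAX.mono_right (hT.trans Set.sdiff_subset)
  have hsT : ∀ T : Set V, T ⊆ X \ {s} → Disjoint {s} T := fun T hT => by
    rw [Set.disjoint_singleton_left]; exact fun h => (hT h).2 rfl
  have hAs : Disjoint A {s} := hAX.mono_right (by simpa using hs)
  have An : A.Nonempty := by obtain ⟨a, ha, _⟩ := ns; exact ⟨a, ha⟩
  have tAs : Touch G A {s} := by obtain ⟨a, ha, h⟩ := ns; exact ⟨a, ha, s, rfl, h⟩
  have tA1 : Touch G A T₁ := by obtain ⟨a, ha, h⟩ := n1; exact ⟨a, ha, _, m1, h⟩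
  have tA2 : Touch G A T₂ := by obtain ⟨a, ha, h⟩ := n2; exact ⟨a, ha, _, m2, h⟩
  have tA3 : Touch G A T₃ := by obtain ⟨a, ha, h⟩ := n3; exact ⟨a, ha, _, m3, h⟩
  have ts1 : Touch G {s} T₁ := ⟨s, rfl, _, m1, s1⟩
  have ts2 : Touch G {s} T₂ := ⟨s, rfl, _, m2, s2⟩
  have ts3 : Touch G {s} T₃ := ⟨s, rfl, _, m3, s3⟩
  rcases h with ⟨t12, t13, t23⟩ | ⟨p, hp, p1, p2, p3, q1, q2, q3⟩
  · exact hK5 _ (mk_K5 (B₀ := A) (B₁ := {s}) (B₂ := T₁) (B₃ := T₂) (B₄ := T₃) An ⟨s, rfl⟩ ⟨_, m1⟩ ⟨_, m2⟩ ⟨_, m3⟩ hA (conn_singleton G s) k1 k2 k3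
      hAs (hAT _ j1) (hAT _ j2) (hAT _ j3) (hsT _ j1) (hsT _ j2) (hsT _ j3) d12 d13 d23
      tAs tA1 tA2 tA3 ts1 ts2 ts3 t12 t13 t23)
  · have hps : Disjoint ({s} : Set V) {p} := hsT _ (by simpa using hp)
    have hpA : Disjoint A {p} := hAT _ (by simpa using hp)
    have f1 : Disjoint {p} T₁ := by simpa using p1
    have f2 : Disjoint {p} T₂ := by simpa using p2
    have f3 : Disjoint {p} T₃ := by simpa using p3
    exact hK33 _ (mk_K33 (B₀ := A) (B₂ := {s}) (B₄ := {p}) (B₁ := T₁) (B₃ := T₂) (B₅ := T₃)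
      An ⟨_, m1⟩ ⟨s, rfl⟩ ⟨_, m2⟩ ⟨p, rfl⟩ ⟨_, m3⟩
      hA k1 (conn_singleton G s) k2 (conn_singleton G p) k3
      (hAT _ j1) hAs (hAT _ j2) hpA (hAT _ j3)
      (hsT _ j1).symm d12 f1.symm d13 (hsT _ j2) hps (hsT _ j3) f2.symm d23 f3
      tA1 tA2 tA3 ts1 ts2 ts3 q1 q2 q3)

end Combinatorics
section Coloring

variable {V : Type}

/-- Colorability of the subgraph induced on `X` from the lists `L`. -/
def Col (G : SimpleGraph V) (X : Finset V) (L : V → Finset ℕ) : Prop :=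
  ∃ c : V → ℕ, (∀ v ∈ X, c v ∈ L v) ∧ ∀ u ∈ X, ∀ v ∈ X, G.Adj u v → c u ≠ c v

/-- The vertex `v` has a neighbour in `A`. -/
def Nb (G : SimpleGraph V) (A : Set V) (v : V) : Prop := ∃ a ∈ A, G.Adj a v

/-- Common part of the inductive hypotheses. -/
def Base (G : SimpleGraph V) (X : Finset V) (A : Set V) (L : V → Finset ℕ) : Prop :=
  Conn G A ∧ (∀ v ∈ X, v ∉ A) ∧ ∀ v ∈ X, ¬ Nb G A v → 5 ≤ (L v).card

/-- No precolored vertex. -/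
def T0 (G : SimpleGraph V) (X : Finset V) (A : Set V) (L : V → Finset ℕ) : Prop :=
  Base G X A L ∧ ∀ v ∈ X, 3 ≤ (L v).card

/-- One precolored vertex. -/
def T1 (G : SimpleGraph V) (X : Finset V) (A : Set V) (L : V → Finset ℕ) (x : V) : Prop :=
  Base G X A L ∧ x ∈ X ∧ Nb G A x ∧ (L x).Nonempty ∧ ∀ v ∈ X, v ≠ x → 3 ≤ (L v).card

/-- A precolored edge. -/
def T2 (G : SimpleGraph V) (X : Finset V) (A : Set V) (L : V → Finset ℕ) (x y : V) : Prop :=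
  Base G X A L ∧ x ∈ X ∧ y ∈ X ∧ Nb G A x ∧ Nb G A y ∧ G.Adj x y ∧ (L x).Nonempty ∧
    2 ≤ (L y).card ∧ ∀ v ∈ X, v ≠ x → v ≠ y → 3 ≤ (L v).card

open Classical in
/-- Lists after giving colour `c` to `x`. -/
def delL (G : SimpleGraph V) (L : V → Finset ℕ) (x : V) (c : ℕ) (v : V) : Finset ℕ :=
  if G.Adj x v then (L v).erase c else L v

lemma delL_not {G : SimpleGraph V} {L : V → Finset ℕ} {x v : V} {c : ℕ} (h : ¬ G.Adj x v) :
    delL G L x c v = L v := if_neg h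

lemma delL_card {G : SimpleGraph V} {L : V → Finset ℕ} {x v : V} {c : ℕ} :
    (L v).card ≤ (delL G L x c v).card + 1 := by
  classical
  unfold delL
  split_ifs
  · have := Finset.pred_card_le_card_erase (s := L v) (a := c)
    omega
  · omega

open Classical in
lemma col_of_del {G : SimpleGraph V} {X : Finset V} {L : V → Finset ℕ} {x : V} {c : ℕ}
    (hc : c ∈ L x) (h : Col G (X.erase x) (delL G L x c)) : Col G X L := by
  obtain ⟨d, hd, hp⟩ := h
  have hsub : ∀ v, delL G L x c v ⊆ L v := by
    intro v; unfold delL; split_ifs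
    · exact Finset.erase_subset _ _
    · exact subset_rfl
  have hne : ∀ v ∈ X, v ≠ x → G.Adj x v → d v ≠ c := by
    intro v hv hvx hxv
    have := hd v (Finset.mem_erase.2 ⟨hvx, hv⟩)
    simp only [delL, if_pos hxv] at this
    exact (Finset.mem_erase.1 this).1
  refine ⟨fun v => if v = x then c else d v, fun v hv => ?_, fun u hu v hv huv => ?_⟩
  · by_cases hvx : v = x
    · subst hvx; simpa using hc
    · simp only [hvx, if_false]
      exact hsub v (hd v (Finset.mem_erase.2 ⟨hvx, hv⟩))
  · by_cases hux : u = x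
    · have hvx : v ≠ x := by rintro rfl; exact huv.ne hux
      simp only [hux, hvx, if_true, if_false]
      exact (hne v hv hvx (hux ▸ huv)).symm
    · by_cases hvx : v = x
      · simp only [hux, hvx, if_true, if_false]
        exact hne u hu hux (hvx ▸ huv.symm)
      · simp only [hux, hvx, if_false]
        exact hp u (Finset.mem_erase.2 ⟨hux, hu⟩) v (Finset.mem_erase.2 ⟨hvx, hv⟩) huv

lemma Nb.mono {G : SimpleGraph V} {A : Set V} {v x : V} (h : Nb G A v) : Nb G (insert x A) v := by
  obtain ⟨a, ha, h⟩ := h; exact ⟨a, Or.inr ha, h⟩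

open Classical in
lemma base_del {G : SimpleGraph V} {X : Finset V} {A : Set V} {L : V → Finset ℕ} {x : V} (c : ℕ)
    (h : Base G X A L) (hn : Nb G A x) :
    Base G (X.erase x) (insert x A) (delL G L x c) := by
  obtain ⟨h1, h2, h3⟩ := h
  refine ⟨conn_insert h1 hn, fun v hv => ?_, fun v hv hnb => ?_⟩
  · rw [Finset.mem_erase] at hv
    rintro (h | h)
    · exact hv.1 h
    · exact h2 v hv.2 h
  · rw [delL_not (fun h => hnb ⟨x, Or.inl rfl, h⟩)]
    exact h3 v (Finset.mem_of_mem_erase hv) (fun h => hnb h.mono)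

/-- Induction hypothesis. -/
def IH (G : SimpleGraph V) (n : ℕ) : Prop :=
  ∀ X : Finset V, X.card < n → ∀ A L, (T0 G X A L → Col G X L) ∧ (∀ x, T1 G X A L x → Col G X L) ∧
    ∀ x y, T2 G X A L x y → Col G X L

lemma base_mono {G : SimpleGraph V} {X Y : Finset V} {A : Set V} {L : V → Finset ℕ}
    (h : Base G X A L) (hY : Y ⊆ X) : Base G Y A L :=
  ⟨h.1, fun v hv => h.2.1 v (hY hv), fun v hv => h.2.2 v (hY hv)⟩

/-- Splitting along a separating edge inside the boundary. -/
lemma split_step {G : SimpleGraph V} {X : Finset V} {A : Set V} {L : V → Finset ℕ} {x y : V}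
    (ih : IH G X.card) (h : T2 G X A L x y) {k l : V} (hk : k ∈ X) (hl : l ∈ X)
    (nk : Nb G A k) (nl : Nb G A l) (hkl : G.Adj k l)
    (hnc : ¬ Conn G ((X : Set V) \ {k, l})) : Col G X L := by
  classical
  obtain ⟨hb, hx, hy, nx, ny, hxy, Lx, Ly, L3⟩ := h
  set K : Set V := {k, l} with hK
  unfold Conn at hnc
  push Not at hnc
  obtain ⟨u, hu, w, hw, huw⟩ := hnc
  have hz : ∃ z ∈ (X : Set V) \ K, (x ∈ K ∨ RT G (X \ K) z x) ∧ (y ∈ K ∨ RT G (X \ K) z y) := by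
    by_cases hxK : x ∈ K
    · by_cases hyK : y ∈ K
      · exact ⟨u, hu, Or.inl hxK, Or.inl hyK⟩
      · exact ⟨y, ⟨hy, hyK⟩, Or.inl hxK, Or.inr Relation.ReflTransGen.refl⟩
    · refine ⟨x, ⟨hx, hxK⟩, Or.inr Relation.ReflTransGen.refl, ?_⟩
      by_cases hyK : y ∈ K
      · exact Or.inl hyK
      · exact Or.inr (Relation.ReflTransGen.single ⟨hxy, ⟨hx, hxK⟩, ⟨hy, hyK⟩⟩)
  obtain ⟨z, hz, zx, zy⟩ := hz
  set Q : Set V := {v | RT G (X \ K) z v} with hQ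
  have QX : ∀ v ∈ Q, v ∈ (X : Set V) \ K := fun v hv => RT.mem hz hv
  have Qclosed : ∀ a ∈ Q, ∀ b ∈ X, G.Adj a b → b ∉ Q → b ∈ K := by
    intro a ha b hb' hab hbQ
    by_contra hbK
    exact hbQ (Relation.ReflTransGen.tail (show RT G (X \ K) z a from ha)
      ⟨hab, QX a ha, hb', hbK⟩)
  set X₁ : Finset V := X.filter (fun v => v ∈ Q ∨ v ∈ K) with hX1
  set X₂ : Finset V := X.filter (fun v => v ∉ Q) with hX2
  have lt1 : X₁.card < X.card := by
    refine Finset.card_lt_card (Finset.filter_ssubset.2 ?_)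
    by_contra hcon
    push Not at hcon
    have hu' := (hcon u hu.1).resolve_right hu.2
    have hw' := (hcon w hw.1).resolve_right hw.2
    exact huw (RT.trans (RT.symm hu') hw')
  have lt2 : X₂.card < X.card := by
    refine Finset.card_lt_card (Finset.filter_ssubset.2 ⟨z, hz.1, ?_⟩)
    exact fun h => h Relation.ReflTransGen.refl
  have x1 : x ∈ X₁ := Finset.mem_filter.2 ⟨hx, zx.symm⟩
  have y1 : y ∈ X₁ := Finset.mem_filter.2 ⟨hy, zy.symm⟩
  obtain ⟨c, hc, hcp⟩ := (ih X₁ lt1 A L).2.2 x y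
    ⟨base_mono hb (Finset.filter_subset _ _), x1, y1, nx, ny, hxy, Lx, Ly,
      fun v hv => L3 v (Finset.mem_of_mem_filter v hv)⟩
  have k1 : k ∈ X₁ := Finset.mem_filter.2 ⟨hk, Or.inr (Or.inl rfl)⟩
  have l1 : l ∈ X₁ := Finset.mem_filter.2 ⟨hl, Or.inr (Or.inr rfl)⟩
  have k2 : k ∈ X₂ := Finset.mem_filter.2 ⟨hk, fun h => (QX k h).2 (Or.inl rfl)⟩
  have l2 : l ∈ X₂ := Finset.mem_filter.2 ⟨hl, fun h => (QX l h).2 (Or.inr rfl)⟩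
  have hckl : c k ≠ c l := hcp k k1 l l1 hkl
  let L₂ : V → Finset ℕ := fun v => if v = k then {c k} else if v = l then {c k, c l} else L v
  have L2k : L₂ k = {c k} := if_pos rfl
  have L2l : L₂ l = {c k, c l} := by simp [L₂, hkl.ne']
  have L2o : ∀ v, v ≠ k → v ≠ l → L₂ v = L v := fun v a b => by simp [L₂, a, b]
  have xyK : ∀ v ∈ X₂, v ≠ k → v ≠ l → v ≠ x ∧ v ≠ y := by
    intro v hv vk vl
    have hvQ := (Finset.mem_filter.1 hv).2
    have hvK : v ∉ K := by simp [hK, vk, vl]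
    constructor
    · rintro rfl; exact zx.elim hvK hvQ
    · rintro rfl; exact zy.elim hvK hvQ
  obtain ⟨d, hd, hdp⟩ := (ih X₂ lt2 A L₂).2.2 k l (by
    refine ⟨⟨hb.1, fun v hv => hb.2.1 v (Finset.mem_of_mem_filter v hv), fun v hv hnv => ?_⟩,
      k2, l2, nk, nl, hkl, by simp [L2k], by rw [L2l, Finset.card_pair hckl], ?_⟩
    · rw [L2o v (by rintro rfl; exact hnv nk) (by rintro rfl; exact hnv nl)]
      exact hb.2.2 v (Finset.mem_of_mem_filter v hv) hnv
    · intro v hv vk vl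
      rw [L2o v vk vl]
      obtain ⟨a, b⟩ := xyK v hv vk vl
      exact L3 v (Finset.mem_of_mem_filter v hv) a b)
  have dk : d k = c k := by have := hd k k2; rw [L2k] at this; simpa using this
  have dl : d l = c l := by
    have h1 := hd l l2
    rw [L2l] at h1
    have h2 := hdp k k2 l l2 hkl
    simp only [Finset.mem_insert, Finset.mem_singleton] at h1
    rcases h1 with h1 | h1
    · exact absurd (dk.trans h1.symm) h2
    · exact h1
  have dK : ∀ v ∈ K, d v = c v := by
    rintro v (rfl | rfl)
    · exact dk
    · exact dl
  have mem1 : ∀ v ∈ X, v ∈ Q → v ∈ X₁ := fun v hv h => Finset.mem_filter.2 ⟨hv, Or.inl h⟩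
  have mem2 : ∀ v ∈ X, v ∉ Q → v ∈ X₂ := fun v hv h => Finset.mem_filter.2 ⟨hv, h⟩
  have cross : ∀ a ∈ X, ∀ b ∈ X, a ∈ Q → b ∉ Q → G.Adj a b → c a ≠ d b := by
    intro a ha b hb' haQ hbQ hab
    have hbK := Qclosed a haQ b hb' hab hbQ
    rw [dK b hbK]
    exact hcp a (mem1 a ha haQ) b (Finset.mem_filter.2 ⟨hb', Or.inr hbK⟩) hab
  refine ⟨fun v => if v ∈ Q then c v else d v, fun v hv => ?_, fun a ha b hb' hab => ?_⟩
  · by_cases hvQ : v ∈ Q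
    · simp only [hvQ, if_true]
      exact hc v (mem1 v hv hvQ)
    · simp only [hvQ, if_false]
      by_cases hvK : v ∈ K
      · rw [dK v hvK]
        exact hc v (Finset.mem_filter.2 ⟨hv, Or.inr hvK⟩)
      · have := hd v (mem2 v hv hvQ)
        rwa [L2o v (fun h => hvK (Or.inl h)) (fun h => hvK (Or.inr h))] at this
  · by_cases haQ : a ∈ Q
    · by_cases hbQ : b ∈ Q
      · simp only [haQ, hbQ, if_true]
        exact hcp a (mem1 a ha haQ) b (mem1 b hb' hbQ) hab
      · simp only [haQ, hbQ, if_true, if_false]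
        exact cross a ha b hb' haQ hbQ hab
    · by_cases hbQ : b ∈ Q
      · simp only [haQ, hbQ, if_true, if_false]
        exact (cross b hb' a ha hbQ haQ hab.symm).symm
      · simp only [haQ, hbQ, if_false]
        exact hdp a (mem2 a ha haQ) b (mem2 b hb' hbQ) hab

lemma step2 {G : SimpleGraph V}
    (hK5 : ∀ B : Fin 5 → Set V, ¬ Model G (fun i j => i ≠ j) B)
    (hK33 : ∀ B : Fin 6 → Set V, ¬ Model G (fun i j => i.1 % 2 = 0 ∧ j.1 % 2 = 1) B)
    {X : Finset V} {A : Set V} {L : V → Finset ℕ} {x y : V}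
    (ih : IH G X.card) (h : T2 G X A L x y) : Col G X L := by
  classical
  by_cases hsep : ∃ k ∈ X, ∃ l ∈ X, Nb G A k ∧ Nb G A l ∧ G.Adj k l ∧
      ¬ Conn G ((X : Set V) \ {k, l})
  · obtain ⟨k, hk, l, hl, nk, nl, hkl, hnc⟩ := hsep
    exact split_step ih h hk hl nk nl hkl hnc
  push Not at hsep
  obtain ⟨hb, hx, hy, nx, ny, hxy, ⟨cx, hcx⟩, Ly, L3⟩ := h
  by_cases hv : ∃ v ∈ X, v ≠ y ∧ Nb G A v ∧ G.Adj x v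
  · obtain ⟨v, hv, hvy, nv, hxv⟩ := hv
    have hvx : v ≠ x := hxv.ne'
    have huniq : ∀ w ∈ X, ∀ w' ∈ X, w ≠ x → w' ≠ x → Nb G A w → Nb G A w' → G.Adj v w →
        G.Adj v w' → w = w' := by
      intro w hw w' hw' wx wx' nw nw' hvw hvw'
      by_contra hww
      exact no_three hK5 hK33 (A := A) (X := (X : Set V)) hb.1
        (Set.disjoint_right.2 fun z hz => hb.2.1 z hz) hv hx hw hw' nv nx nw nw' hxv.symm hvw hvw'
        wx.symm wx'.symm hww (hsep v hv x hx nv nx hxv.symm) (hsep v hv w hw nv nw hvw)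
        (hsep v hv w' hw' nv nw' hvw')
    have hc2 : 2 ≤ ((L v).erase cx).card := by
      have := Finset.pred_card_le_card_erase (s := L v) (a := cx)
      have := L3 v hv hvx hvy
      omega
    obtain ⟨α, hα, β, hβ, hαβ⟩ := Finset.one_lt_card.1 (show 1 < ((L v).erase cx).card from hc2)
    let L' : V → Finset ℕ := fun u => if u = x then {cx} else
      if G.Adj v u ∧ ¬ Nb G A u then ((L u).erase α).erase β else L u
    have L'x : L' x = {cx} := if_pos rfl
    have L'n : ∀ u, u ≠ x → Nb G A u → L' u = L u := fun u a b => by simp [L', a, b]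
    have L'a : ∀ u, u ≠ x → ¬ G.Adj v u → L' u = L u := fun u a b => by simp [L', a, b]
    have L'b : ∀ u, u ≠ x → ¬ Nb G A u → G.Adj v u → L' u = ((L u).erase α).erase β :=
      fun u a b c => by simp [L', a, b, c]
    have L'sub : ∀ u, L' u ⊆ L u := by
      intro u
      by_cases hux : u = x
      · subst hux; rw [L'x]; simpa using hcx
      by_cases hnu : Nb G A u
      · rw [L'n u hux hnu]
      by_cases hvu : G.Adj v u
      · rw [L'b u hux hnu hvu]
        exact (Finset.erase_subset _ _).trans (Finset.erase_subset _ _)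
      · rw [L'a u hux hvu]
    have hlt : (X.erase v).card < X.card := Finset.card_erase_lt_of_mem hv
    obtain ⟨d, hd, hdp⟩ := (ih _ hlt (insert v A) L').2.2 x y (by
      refine ⟨⟨conn_insert hb.1 nv, fun u hu => ?_, fun u hu hnu => ?_⟩,
        Finset.mem_erase.2 ⟨hvx.symm, hx⟩, Finset.mem_erase.2 ⟨hvy.symm, hy⟩, nx.mono, ny.mono,
        hxy, by simp [L'x], by rw [L'n y hxy.ne' ny]; exact Ly, fun u hu hux huy => ?_⟩
      · rw [Finset.mem_erase] at hu
        rintro (h | h)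
        · exact hu.1 h
        · exact hb.2.1 u hu.2 h
      · rw [L'a u (by rintro rfl; exact hnu nx.mono) (fun h => hnu ⟨v, Or.inl rfl, h⟩)]
        exact hb.2.2 u (Finset.mem_of_mem_erase hu) (fun h => hnu h.mono)
      · have huX := Finset.mem_of_mem_erase hu
        by_cases hnu : Nb G A u
        · rw [L'n u hux hnu]; exact L3 u huX hux huy
        · by_cases hvu : G.Adj v u
          · rw [L'b u hux hnu hvu]
            have e1 := Finset.pred_card_le_card_erase (s := L u) (a := α)
            have e2 := Finset.pred_card_le_card_erase (s := (L u).erase α) (a := β)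
            have e3 := hb.2.2 u huX hnu
            omega
          · rw [L'a u hux hvu]; exact L3 u huX hux huy)
    have dx : d x = cx := by
      have := hd x (Finset.mem_erase.2 ⟨hvx.symm, hx⟩)
      rw [L'x] at this; simpa using this
    rw [Finset.mem_erase] at hα hβ
    have hcv : ∃ γ ∈ L v, ∀ u ∈ X, G.Adj v u → d u ≠ γ := by
      have hgood : ∀ γ, (γ = α ∨ γ = β) → ∀ u ∈ X, G.Adj v u → (u = x ∨ ¬ Nb G A u) →
          d u ≠ γ := by
        intro γ hγ u hu hvu hcase
        by_cases hux : u = x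
        · subst hux; rw [dx]
          rcases hγ with rfl | rfl
          · exact hα.1.symm
          · exact hβ.1.symm
        · have hnu := hcase.resolve_left hux
          have := hd u (Finset.mem_erase.2 ⟨hvu.ne', hu⟩)
          rw [L'b u hux hnu hvu, Finset.mem_erase, Finset.mem_erase] at this
          rcases hγ with rfl | rfl
          · exact this.2.1
          · exact this.1
      by_cases hw : ∃ w ∈ X, w ≠ x ∧ Nb G A w ∧ G.Adj v w
      · obtain ⟨w, hw, hwx, nw, hvw⟩ := hw
        have hγ : ∃ γ, (γ = α ∨ γ = β) ∧ γ ≠ d w := by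
          by_cases hh : α = d w
          · exact ⟨β, Or.inr rfl, fun h => hαβ (hh.trans h.symm)⟩
          · exact ⟨α, Or.inl rfl, hh⟩
        obtain ⟨γ, hγ, hγw⟩ := hγ
        refine ⟨γ, by rcases hγ with rfl | rfl; exacts [hα.2, hβ.2], fun u hu hvu => ?_⟩
        by_cases hcase : u = x ∨ ¬ Nb G A u
        · exact hgood γ hγ u hu hvu hcase
        · push Not at hcase
          rw [huniq u hu w hw hcase.1 hwx hcase.2 nw hvu hvw]
          exact hγw.symm
      · refine ⟨α, hα.2, fun u hu hvu => hgood α (Or.inl rfl) u hu hvu ?_⟩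
        by_contra hcon
        push Not at hcon
        exact hw ⟨u, hu, hcon.1, hcon.2, hvu⟩
    obtain ⟨γ, hγ, hγp⟩ := hcv
    refine ⟨fun u => if u = v then γ else d u, fun u hu => ?_, fun a ha b hb' hab => ?_⟩
    · by_cases huv : u = v
      · subst huv; simpa using hγ
      · simp only [huv, if_false]
        exact L'sub u (hd u (Finset.mem_erase.2 ⟨huv, hu⟩))
    · by_cases hav : a = v
      · have hbv : b ≠ v := by rintro rfl; exact hab.ne hav
        simp only [hav, hbv, if_true, if_false]
        exact (hγp b hb' (hav ▸ hab)).symm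
      · by_cases hbv : b = v
        · simp only [hav, hbv, if_true, if_false]
          exact hγp a ha (hbv ▸ hab.symm)
        · simp only [hav, hbv, if_false]
          exact hdp a (Finset.mem_erase.2 ⟨hav, ha⟩) b (Finset.mem_erase.2 ⟨hbv, hb'⟩) hab
  · push Not at hv
    refine col_of_del hcx ((ih _ (Finset.card_erase_lt_of_mem hx) (insert x A) _).2.1 y ?_)
    refine ⟨base_del cx hb nx, Finset.mem_erase.2 ⟨hxy.ne', hy⟩, ny.mono, ?_, fun u hu huy => ?_⟩
    · rw [← Finset.card_pos]
      have := delL_card (G := G) (L := L) (x := x) (v := y) (c := cx)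
      omega
    · rw [Finset.mem_erase] at hu
      by_cases hnu : Nb G A u
      · rw [delL_not (hv u hu.2 huy hnu)]
        exact L3 u hu.2 hu.1 huy
      · have := delL_card (G := G) (L := L) (x := x) (v := u) (c := cx)
        have := hb.2.2 u hu.2 hnu
        omega

lemma step1 {G : SimpleGraph V}
    (hK5 : ∀ B : Fin 5 → Set V, ¬ Model G (fun i j => i ≠ j) B)
    (hK33 : ∀ B : Fin 6 → Set V, ¬ Model G (fun i j => i.1 % 2 = 0 ∧ j.1 % 2 = 1) B)
    {X : Finset V} {A : Set V} {L : V → Finset ℕ} {x : V}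
    (ih : IH G X.card) (h : T1 G X A L x) : Col G X L := by
  classical
  obtain ⟨hb, hx, nx, ⟨cx, hcx⟩, L3⟩ := h
  by_cases hv : ∃ v ∈ X, Nb G A v ∧ G.Adj x v
  · obtain ⟨v, hv, nv, hxv⟩ := hv
    refine step2 hK5 hK33 ih (x := x) (y := v) ⟨hb, hx, hv, nx, nv, hxv, ⟨cx, hcx⟩, ?_,
      fun u hu hux _ => L3 u hu hux⟩
    have := L3 v hv hxv.ne'
    omega
  · push Not at hv
    refine col_of_del hcx ((ih _ (Finset.card_erase_lt_of_mem hx) (insert x A) _).1 ?_)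
    refine ⟨base_del cx hb nx, fun u hu => ?_⟩
    rw [Finset.mem_erase] at hu
    by_cases hnu : Nb G A u
    · rw [delL_not (hv u hu.2 hnu)]
      exact L3 u hu.2 hu.1
    · have := delL_card (G := G) (L := L) (x := x) (v := u) (c := cx)
      have := hb.2.2 u hu.2 hnu
      omega

lemma step0 {G : SimpleGraph V}
    (hK5 : ∀ B : Fin 5 → Set V, ¬ Model G (fun i j => i ≠ j) B)
    (hK33 : ∀ B : Fin 6 → Set V, ¬ Model G (fun i j => i.1 % 2 = 0 ∧ j.1 % 2 = 1) B)
    {X : Finset V} {A : Set V} {L : V → Finset ℕ}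
    (ih : IH G X.card) (h : T0 G X A L) : Col G X L := by
  classical
  obtain ⟨hb, L3⟩ := h
  by_cases hv : ∃ v ∈ X, Nb G A v
  · obtain ⟨v, hv, nv⟩ := hv
    refine step1 hK5 hK33 ih (x := v) ⟨hb, hv, nv, ?_, fun u hu _ => L3 u hu⟩
    rw [← Finset.card_pos]
    have := L3 v hv
    omega
  · push Not at hv
    rcases X.eq_empty_or_nonempty with rfl | ⟨x, hx⟩
    · exact ⟨fun _ => 0, by simp, by simp⟩
    have hL5 : ∀ u ∈ X, 5 ≤ (L u).card := fun u hu => hb.2.2 u hu (hv u hu)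
    obtain ⟨cx, hcx⟩ : (L x).Nonempty := by
      rw [← Finset.card_pos]
      have := L3 x hx
      omega
    refine col_of_del hcx ((ih _ (Finset.card_erase_lt_of_mem hx) {x} _).1 ?_)
    refine ⟨⟨conn_singleton G x, fun u hu h => (Finset.mem_erase.1 hu).1 h, fun u hu hnu => ?_⟩,
      fun u hu => ?_⟩
    · rw [delL_not (fun h => hnu ⟨x, rfl, h⟩)]
      exact hL5 u (Finset.mem_of_mem_erase hu)
    · have := delL_card (G := G) (L := L) (x := x) (v := u) (c := cx)
      have := hL5 u (Finset.mem_of_mem_erase hu)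
      omega

lemma ih_all {G : SimpleGraph V}
    (hK5 : ∀ B : Fin 5 → Set V, ¬ Model G (fun i j => i ≠ j) B)
    (hK33 : ∀ B : Fin 6 → Set V, ¬ Model G (fun i j => i.1 % 2 = 0 ∧ j.1 % 2 = 1) B)
    (n : ℕ) : IH G n := by
  induction n with
  | zero => intro X hX; omega
  | succ n ih =>
    intro X hX A L
    have ih' : IH G X.card := fun Y hY => ih Y (by omega)
    exact ⟨step0 hK5 hK33 ih', fun x => step1 hK5 hK33 ih', fun x y => step2 hK5 hK33 ih'⟩

end Coloring

/-- **Every planar graph is 5-choosable.**  If `G` admits a drawing in the plane without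
crossings, then `G` has a proper coloring from any assignment of lists of size at least 5. -/
theorem planar_graphs_are_5_choosable
    {V : Type} [Fintype V] (G : SimpleGraph V) (D : Drawing G) (hplane : D.IsPlane)
    (L : V → Finset ℕ) (hL : ∀ v : V, 5 ≤ (L v).card) :
    ListColorable G L := by
  have hI := ih_all (no_K5_model D hplane) (no_K33_model D hplane)
    ((Finset.univ : Finset V).card + 1)
  obtain ⟨c, h1, h2⟩ := (hI Finset.univ (Nat.lt_succ_self _) ∅ L).1
    ⟨⟨fun u hu => absurd hu (Set.notMem_empty u), fun v _ => Set.notMem_empty v,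
      fun v _ _ => hL v⟩, fun v _ => le_trans (by norm_num) (hL v)⟩
  exact ⟨c, fun v => h1 v (Finset.mem_univ v),
    fun u v huv => h2 u (Finset.mem_univ u) v (Finset.mem_univ v) huv⟩
end
end
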